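/- arXiv:1803.08785 — 4 statements merged into one kernel-verified Lean document; each statement's English description precedes it below -/
import Mathlib

section
/- Let D be a Dedekind domain and let n < m be positive integers. A matrix M ∈ Mat_{n×m}(D) is rectangular unimodular (i.e. there exist m−n rows in D^m whose adjunction to M yields an m×m matrix whose determinant is a unit of D) if and only if the ideal of D generated by all n×n minors of M is equal to D. -/
/-- An `n × m` matrix `M` over a commutative ring (with `n ≤ m`) is rectangular unimodular
if one can adjoin `m − n` rows to `M` so that the resulting `m × m` matrix has determinant
a unit. -/
def IsRectUnimodular {R : Type*} [CommRing R] {n m : ℕ} (h : n ≤ m)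
    (M : Matrix (Fin n) (Fin m) R) : Prop :=
  ∃ B : Matrix (Fin (m - n)) (Fin m) R,
    IsUnit
      (((Matrix.fromRows M B).submatrix
        (fun i : Fin m => finSumFinEquiv.symm (finCongr (Nat.add_sub_cancel' h).symm i))
        id).det)

/-!
Over any commutative ring the maximal minors of `M` generate the unit ideal exactly when `M` has a
right inverse `N`: Cauchy–Binet puts `det (M * N)` in the ideal of minors, and conversely each minor
`d` gives, through an adjugate, a matrix `N` with `M * N = d • 1`.

A right inverse makes the span of the rows of `M` a free direct summand of `R ^ m`, so its quotient
is stably free, and `M` can be completed as soon as this quotient is free. Cancelling one copy of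
`R` at a time, this reduces to moving a unimodular vector to a standard basis vector by an
automorphism. If `R` has stable range at most two, a transvection makes two coordinates of the
vector coprime, and these two are then handled by a `2 × 2` matrix of determinant one.

In a Dedekind domain a nonzero `a` lies in only finitely many maximal ideals, so by the Chinese
remainder theorem some `b + t * c` avoids all of them whenever `(a, b, c)` is unimodular.
-/

section MaximalMinors

variable {R n m : Type*} [CommRing R] [Fintype n] [DecidableEq n]

/-- The ideal generated by the maximal minors of a matrix that has at most as many rows as columns
(it is zero for a matrix with more rows than columns). The columns are selected by embeddings, in
any order, so a minor may occur with both signs. -/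
def maximalMinorsIdeal (M : Matrix n m R) : Ideal R :=
  Ideal.span {d : R | ∃ c : n ↪ m, d = (M.submatrix id c).det}

theorem det_submatrix_mem_maximalMinorsIdeal (M : Matrix n m R) (c : n → m) :
    (M.submatrix id c).det ∈ maximalMinorsIdeal M := by
  by_cases hc : Function.Injective c
  · exact Ideal.subset_span ⟨⟨c, hc⟩, rfl⟩
  · obtain ⟨i, j, hij, hne⟩ := Function.not_injective_iff.mp hc
    rw [Matrix.det_zero_of_column_eq hne fun k => by simp [hij]]
    exact Ideal.zero_mem _

theorem det_mul_eq_sum_prod_mul_det_submatrix [Fintype m] (M : Matrix n m R) (N : Matrix m n R) :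
    (M * N).det = ∑ c : n → m, (∏ i, N (c i) i) * (M.submatrix id c).det := by
  have columns : (M * N).transpose = fun i => ∑ j, N j i • M.transpose j := by
    ext i k
    simp [Matrix.mul_apply, mul_comm]
  rw [← Matrix.det_transpose, columns]
  refine (Matrix.detRowAlternating.toMultilinearMap.map_sum
    fun i j => N j i • M.transpose j).trans (Finset.sum_congr rfl fun c _ => ?_)
  rw [MultilinearMap.map_smul_univ, smul_eq_mul, ← Matrix.det_transpose (M.submatrix id c)]
  rfl

theorem det_mul_mem_maximalMinorsIdeal [Fintype m] (M : Matrix n m R) (N : Matrix m n R) :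
    (M * N).det ∈ maximalMinorsIdeal M := by
  rw [det_mul_eq_sum_prod_mul_det_submatrix]
  exact Ideal.sum_mem _ fun c _ =>
    Ideal.mul_mem_left _ _ (det_submatrix_mem_maximalMinorsIdeal M c)

theorem exists_mul_eq_smul_one_of_mem_maximalMinorsIdeal [Fintype m] (M : Matrix n m R) {d : R}
    (hd : d ∈ maximalMinorsIdeal M) : ∃ N : Matrix m n R, M * N = d • 1 := by
  classical
  induction hd using Submodule.span_induction with
  | mem d hd =>
    obtain ⟨c, rfl⟩ := hd
    refine ⟨(1 : Matrix m m R).submatrix id c * (M.submatrix id c).adjugate, ?_⟩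
    rw [← Matrix.mul_assoc, ← Matrix.mul_adjugate]
    congr 1
    simpa using Matrix.mul_submatrix_one (Equiv.refl m) c M
  | zero => exact ⟨0, by simp⟩
  | add x y _ _ hx hy =>
    obtain ⟨N, hN⟩ := hx
    obtain ⟨N', hN'⟩ := hy
    exact ⟨N + N', by rw [Matrix.mul_add, hN, hN', add_smul]⟩
  | smul a x _ hx =>
    obtain ⟨N, hN⟩ := hx
    exact ⟨a • N, by rw [Matrix.mul_smul, hN, smul_smul, smul_eq_mul]⟩

theorem maximalMinorsIdeal_eq_top_iff_exists_mul_eq_one [Fintype m] (M : Matrix n m R) :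
    maximalMinorsIdeal M = ⊤ ↔ ∃ N : Matrix m n R, M * N = 1 := by
  rw [Ideal.eq_top_iff_one]
  constructor
  · intro h
    simpa using exists_mul_eq_smul_one_of_mem_maximalMinorsIdeal M h
  · rintro ⟨N, hN⟩
    simpa [hN] using det_mul_mem_maximalMinorsIdeal M N

end MaximalMinors

section StableRange

variable {R : Type*} [CommRing R]

variable (R) in
/-- The ring `R` has stable range at most two in the sense of Bass: every unimodular triple
`(a, b, c)` can be shortened to a unimodular pair by adding multiples of `c` to `a` and `b`. -/
def HasStableRangeTwo : Prop :=
  ∀ ⦃a b c p q r : R⦄, p * a + q * b + r * c = 1 → ∃ x y : R, IsCoprime (a + x * c) (b + y * c)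

theorem isCoprime_of_forall_isMaximal {a b : R}
    (h : ∀ P : Ideal R, P.IsMaximal → a ∈ P → b ∉ P) : IsCoprime a b := by
  rw [← Ideal.isCoprime_span_singleton_iff, Ideal.isCoprime_iff_sup_eq]
  by_contra hne
  obtain ⟨P, hP, hle⟩ := Ideal.exists_le_maximal _ hne
  simp only [sup_le_iff, Ideal.span_singleton_le_iff_mem] at hle
  exact h P hP hle.1 hle.2

theorem exists_isCoprime_add_mul_of_finite {a b c p q r : R}
    (ha : {P : Ideal R | P.IsMaximal ∧ a ∈ P}.Finite) (habc : p * a + q * b + r * c = 1) :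
    ∃ t : R, IsCoprime a (b + t * c) := by
  classical
  have := ha.to_subtype
  have coprime : Pairwise (Function.onFun IsCoprime
      fun P : {P : Ideal R | P.IsMaximal ∧ a ∈ P} => (P : Ideal R)) := fun P Q hPQ =>
    have := P.2.1
    have := Q.2.1
    Ideal.isCoprime_of_isMaximal (Subtype.coe_ne_coe.mpr hPQ)
  obtain ⟨t, ht⟩ :=
    Ideal.exists_forall_sub_mem_ideal coprime fun P => if b ∈ (P : Ideal R) then 1 else 0
  refine ⟨t, isCoprime_of_forall_isMaximal fun P hP haP hbtc => ?_⟩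
  have htP := ht ⟨P, hP, haP⟩
  by_cases hb : b ∈ P
  · have hc : c ∉ P := fun hc => hP.ne_top <| P.eq_top_iff_one.mpr <| habc ▸
      P.add_mem (P.add_mem (P.mul_mem_left p haP) (P.mul_mem_left q hb)) (P.mul_mem_left r hc)
    have htc : t * c ∈ P := (P.add_mem_iff_right hb).mp hbtc
    have ht1 : t ∈ P := (hP.isPrime.mem_or_mem htc).resolve_right hc
    rw [if_pos hb] at htP
    exact hP.ne_top (P.eq_top_iff_one.mpr (by simpa using P.sub_mem ht1 htP))
  · rw [if_neg hb, sub_zero] at htP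
    exact hb ((P.add_mem_iff_left (P.mul_mem_right c htP)).mp hbtc)

theorem hasStableRangeTwo_of_finite_isMaximal_mem
    (hR : ∀ a : R, a ≠ 0 → {P : Ideal R | P.IsMaximal ∧ a ∈ P}.Finite) :
    HasStableRangeTwo R := by
  intro a b c p q r habc
  by_cases ha : a = 0
  · by_cases hb : b = 0
    · subst ha hb
      have hc : r * c = 1 := by simpa using habc
      exact ⟨1, 0, r, 0, by linear_combination hc⟩
    · rw [add_comm (p * a)] at habc
      obtain ⟨t, ht⟩ := exists_isCoprime_add_mul_of_finite (hR b hb) habc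
      exact ⟨t, 0, by simpa using ht.symm⟩
  · obtain ⟨t, ht⟩ := exists_isCoprime_add_mul_of_finite (hR a ha) habc
    exact ⟨0, t, by simpa using ht⟩

theorem finite_setOf_isMaximal_mem [IsNoetherianRing R] [Ring.DimensionLEOne R] {a : R}
    (ha : a ≠ 0) : {P : Ideal R | P.IsMaximal ∧ a ∈ P}.Finite := by
  refine ((Ideal.span {a}).finite_minimalPrimes_of_isNoetherianRing R).subset ?_
  rintro P ⟨hP, haP⟩
  refine ⟨⟨hP.isPrime, (Ideal.span_singleton_le_iff_mem P).mpr haP⟩, fun Q ⟨hQ, haQ⟩ hQP => ?_⟩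
  have hQ_ne_bot : Q ≠ ⊥ := by
    rintro rfl
    exact ha (by simpa using haQ)
  exact ((hQ.isMaximal hQ_ne_bot).eq_of_le hP.ne_top hQP).ge

theorem hasStableRangeTwo_of_dimensionLEOne [IsNoetherianRing R] [Ring.DimensionLEOne R] :
    HasStableRangeTwo R :=
  hasStableRangeTwo_of_finite_isMaximal_mem fun _ => finite_setOf_isMaximal_mem

end StableRange

section UnimodularVector

variable {R ι : Type*} [CommRing R]

theorem exists_linearEquiv_isCoprime_apply (hR : HasStableRangeTwo R) {v : ι → R}
    {φ : Module.Dual R (ι → R)} (hφ : φ v = 1) {i j : ι} (hij : i ≠ j) :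
    ∃ f : (ι → R) ≃ₗ[R] (ι → R), IsCoprime (f v i) (f v j) := by
  classical
  let p := φ (Pi.single i 1)
  let q := φ (Pi.single j 1)
  let ψ : Module.Dual R (ι → R) := φ - p • LinearMap.proj i - q • LinearMap.proj j
  have hψv : p * v i + q * v j + 1 * ψ v = 1 := by
    simp [ψ, hφ]
  obtain ⟨x, y, hxy⟩ := hR hψv
  have hψ : ψ (Pi.single i x + Pi.single j y) = 0 := by
    have single_eq_smul (l : ι) (z : R) : (Pi.single l z : ι → R) = z • Pi.single l 1 := by
      simp [← Pi.single_smul]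
    rw [map_add, single_eq_smul i, single_eq_smul j, map_smul, map_smul]
    simp [ψ, p, q, hij, hij.symm]
  refine ⟨LinearEquiv.transvection hψ, ?_⟩
  simpa [LinearMap.transvection.apply, hij, hij.symm, mul_comm] using hxy

variable [DecidableEq ι]

theorem exists_linearEquiv_apply_eq_single_of_isCoprime {v : ι → R} {i j : ι} (hij : i ≠ j)
    (hv : IsCoprime (v i) (v j)) :
    ∃ f : (ι → R) ≃ₗ[R] (ι → R), f v = Pi.single i 1 := by
  obtain ⟨p, q, hpq⟩ := hv
  -- The inverse has `v` as its `i`-th column, and restricts to `!![v i, -q; v j, p]` on the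
  -- coordinates `i` and `j`.
  refine ⟨{
    toFun u l :=
      if l = i then p * u i + q * u j
      else if l = j then v i * u j - v j * u i
      else u l - v l * (p * u i + q * u j)
    invFun u l :=
      if l = i then v i * u i - q * u j
      else if l = j then v j * u i + p * u j
      else u l + v l * u i
    map_add' _ _ := by ext l; simp only [Pi.add_apply]; split_ifs <;> ring
    map_smul' _ _ := by
      ext l; simp only [Pi.smul_apply, smul_eq_mul, RingHom.id_apply]; split_ifs <;> ring
    left_inv _ := by ext l; grind
    right_inv _ := by ext l; grind }, ?_⟩
  ext l
  simp only [LinearEquiv.coe_mk, LinearMap.coe_mk, AddHom.coe_mk, Pi.single_apply]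
  grind

theorem exists_linearEquiv_apply_eq_single_of_unique [Unique ι] {v : ι → R}
    {φ : Module.Dual R (ι → R)} (hφ : φ v = 1) :
    ∃ f : (ι → R) ≃ₗ[R] (ι → R), f v = Pi.single default 1 := by
  have hv : v = v default • Pi.single default 1 := by
    ext i
    simp [Unique.eq_default i]
  have hmul : v default * φ (Pi.single default 1) = 1 := by
    rw [← smul_eq_mul, ← map_smul, ← hv, hφ]
  refine ⟨LinearEquiv.smulOfUnit (Units.mkOfMulEqOne _ _ hmul)⁻¹, ?_⟩
  ext i
  simp [LinearEquiv.smulOfUnit, Units.smul_def, Unique.eq_default i, mul_comm]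

theorem exists_linearEquiv_apply_eq_single (hR : HasStableRangeTwo R) [Nonempty ι] {v : ι → R}
    {φ : Module.Dual R (ι → R)} (hφ : φ v = 1) :
    ∃ (i : ι) (f : (ι → R) ≃ₗ[R] (ι → R)), f v = Pi.single i 1 := by
  obtain _ | _ := subsingleton_or_nontrivial ι
  · obtain ⟨_⟩ := nonempty_unique ι
    exact ⟨default, exists_linearEquiv_apply_eq_single_of_unique hφ⟩
  · obtain ⟨i, j, hij⟩ := exists_pair_ne ι
    obtain ⟨f, hf⟩ := exists_linearEquiv_isCoprime_apply hR hφ hij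
    obtain ⟨g, hg⟩ := exists_linearEquiv_apply_eq_single_of_isCoprime hij hf
    exact ⟨i, f.trans g, hg⟩

end UnimodularVector

section Cancellation

variable {R : Type*} [CommRing R]

theorem free_of_linearEquiv_apply_eq_single {K ι : Type*} [AddCommGroup K] [Module R K] [Finite ι]
    [DecidableEq ι] (g : (K × R) ≃ₗ[R] (ι → R)) {i : ι} (hg : g (0, 1) = Pi.single i 1) :
    Module.Free R K := by
  let π : (K × R) →ₗ[R] ({j // j ≠ i} → R) := LinearMap.funLeft R R Subtype.val ∘ₗ g
  have hg_inr (c : R) : g (0, c) = Pi.single i c := by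
    rw [show ((0, c) : K × R) = c • (0, 1) by simp, map_smul, hg, ← Pi.single_smul]
    simp
  have surj : Function.Surjective π :=
    (LinearMap.funLeft_surjective_of_injective R R _ Subtype.val_injective).comp g.surjective
  have ker_eq : LinearMap.ker (LinearMap.fst R K R) = LinearMap.ker π := by
    ext ⟨x, c⟩
    simp only [LinearMap.mem_ker, LinearMap.fst_apply]
    constructor
    · rintro rfl
      ext j
      simp [π, LinearMap.funLeft_apply, hg_inr, j.2]
    · intro hx
      have : g (x, c) = g (0, g (x, c) i) := by
        rw [hg_inr]
        ext j
        obtain rfl | hj := eq_or_ne j i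
        · simp
        · simpa [π, LinearMap.funLeft_apply, hj] using congrFun hx ⟨j, hj⟩
      exact congrArg Prod.fst (g.injective this)
  exact Module.Free.of_equiv <| (LinearMap.quotKerEquivOfSurjective π surj).symm.trans <|
    (Submodule.quotEquivOfEq _ _ ker_eq.symm).trans <|
      LinearMap.quotKerEquivOfSurjective _ LinearMap.fst_surjective

theorem free_of_free_prod_self (hR : HasStableRangeTwo R) {K : Type*} [AddCommGroup K] [Module R K]
    [Module.Finite R K] [Module.Free R (K × R)] : Module.Free R K := by
  classical
  obtain _ | _ := subsingleton_or_nontrivial R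
  · have := Module.subsingleton R K
    infer_instance
  let e : (K × R) ≃ₗ[R] (Module.Free.ChooseBasisIndex R (K × R) → R) :=
    (Module.Free.chooseBasis R (K × R)).equivFun
  obtain ⟨i, f, hf⟩ := exists_linearEquiv_apply_eq_single hR (v := e (0, 1))
    (φ := LinearMap.snd R K R ∘ₗ e.symm.toLinearMap) (by simp)
  exact free_of_linearEquiv_apply_eq_single (e.trans f) hf

theorem free_of_free_prod_fin (hR : HasStableRangeTwo R) {K : Type*} [AddCommGroup K] [Module R K]
    [Module.Finite R K] (n : ℕ) (hfree : Module.Free R (K × (Fin n → R))) :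
    Module.Free R K := by
  induction n with
  | zero => exact Module.Free.of_equiv (LinearEquiv.prodUnique : (K × (Fin 0 → R)) ≃ₗ[R] K)
  | succ n ih =>
    let e : (K × (Fin (n + 1) → R)) ≃ₗ[R] ((K × (Fin n → R)) × R) :=
      ((LinearEquiv.refl R K).prodCongr <|
        (Fin.consLinearEquiv R fun _ => R).symm.trans (LinearEquiv.prodComm R R (Fin n → R))).trans
        (LinearEquiv.prodAssoc R K (Fin n → R) R).symm
    have := Module.Free.of_equiv e
    exact ih (free_of_free_prod_self hR)

theorem free_of_isStablyFree (hR : HasStableRangeTwo R) (K : Type*) [AddCommGroup K] [Module R K]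
    [Module.Finite R K] [Module.IsStablyFree R K] : Module.Free R K := by
  obtain ⟨N, _, _, _, _, _⟩ := Module.IsStablyFree.exist_free_prod R K
  let b := (Module.Free.chooseBasis R N).reindex (Fintype.equivFin _)
  have := Module.Free.of_equiv ((LinearEquiv.refl R K).prodCongr b.equivFun)
  exact free_of_free_prod_fin hR _ this

theorem exists_basis_sum_inl_eq_apply (hR : HasStableRangeTwo R) [Nontrivial R]
    {F : Type*} [AddCommGroup F] [Module R F] [Module.Finite R F] [Module.Free R F] {n k : ℕ}
    (hF : Module.finrank R F = n + k) {s : (Fin n → R) →ₗ[R] F} {r : F →ₗ[R] (Fin n → R)}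
    (hrs : r ∘ₗ s = LinearMap.id) :
    ∃ b : Module.Basis (Fin n ⊕ Fin k) R F, ∀ i, b (Sum.inl i) = s (Pi.single i 1) := by
  let Q := F ⧸ LinearMap.range s
  obtain ⟨e, he, -⟩ := Function.Exact.splitInjectiveEquiv (LinearMap.exact_map_mkQ_range s)
    (Submodule.mkQ_surjective _) ⟨r, hrs⟩
  have : Module.Free R ((Fin n → R) × Q) := Module.Free.of_equiv e
  have : Module.IsStablyFree R Q := .of_free_prod' R Q (Fin n → R)
  have : Module.Free R Q := free_of_isStablyFree hR Q
  have hQ : Module.finrank R Q = k := by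
    have := e.finrank_eq
    rw [Module.finrank_prod, Module.finrank_fin_fun, hF] at this
    exact (Nat.add_left_cancel this).symm
  let c : Module.Basis (Fin k) R Q := Module.finBasisOfFinrankEq R Q hQ
  refine ⟨((Pi.basisFun R (Fin n)).prod c).map e.symm, fun i => ?_⟩
  simp [he]

end Cancellation

section RectUnimodular

/-- The splitting of the row indices of an `m × m` matrix into the first `n` and the remaining
`m - n`, as used in `IsRectUnimodular`. -/
def rowSplitEquiv {n m : ℕ} (h : n ≤ m) : Fin m ≃ Fin n ⊕ Fin (m - n) :=
  (finCongr (Nat.add_sub_cancel' h).symm).trans finSumFinEquiv.symm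

variable {R : Type*} [CommRing R] {n m : ℕ} {h : n ≤ m} {M : Matrix (Fin n) (Fin m) R}

theorem isRectUnimodular_of_basis (b : Module.Basis (Fin n ⊕ Fin (m - n)) R (Fin m → R))
    (hb : ∀ i, b (Sum.inl i) = M i) : IsRectUnimodular h M := by
  let B : Matrix (Fin (m - n)) (Fin m) R := Matrix.of fun j => b (Sum.inr j)
  have rows : Matrix.fromRows M B = Matrix.of b := by
    ext (i | j) l
    · simp [hb]
    · simp [B]
  have hdet := (Pi.basisFun R (Fin m)).isUnit_det (b.reindex (rowSplitEquiv h).symm)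
  rw [Module.Basis.det_apply, ← Matrix.det_transpose] at hdet
  refine ⟨B, ?_⟩
  rw [rows]
  convert hdet using 2
  ext i l
  simp [rowSplitEquiv, Module.Basis.toMatrix_apply]

theorem IsRectUnimodular.exists_mul_eq_one (hM : IsRectUnimodular h M) :
    ∃ N : Matrix (Fin m) (Fin n) R, M * N = 1 := by
  obtain ⟨B, hB⟩ := hM
  let A := (Matrix.fromRows M B).submatrix (rowSplitEquiv h) id
  let ρ : Fin n → Fin m := (rowSplitEquiv h).symm ∘ Sum.inl
  have hMA : M = A.submatrix ρ id := by
    ext i l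
    simp [A, ρ]
  refine ⟨A⁻¹.submatrix id ρ, ?_⟩
  have hρ : Function.Injective ρ := (rowSplitEquiv h).symm.injective.comp Sum.inl_injective
  calc M * A⁻¹.submatrix id ρ = (A * A⁻¹).submatrix ρ ρ := by
        rw [Matrix.submatrix_mul _ _ ρ id ρ Function.bijective_id, ← hMA]
    _ = 1 := by rw [Matrix.mul_nonsing_inv A hB, Matrix.submatrix_one ρ hρ]

theorem isRectUnimodular_of_mul_eq_one (hR : HasStableRangeTwo R) {N : Matrix (Fin m) (Fin n) R}
    (hMN : M * N = 1) : IsRectUnimodular h M := by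
  obtain _ | _ := subsingleton_or_nontrivial R
  · exact ⟨0, isUnit_of_subsingleton _⟩
  have hF : Module.finrank R (Fin m → R) = n + (m - n) := by
    rw [Module.finrank_fin_fun, Nat.add_sub_cancel' h]
  have hrs : N.vecMulLinear ∘ₗ M.vecMulLinear = LinearMap.id := by
    refine LinearMap.ext fun x => ?_
    simp [hMN]
  obtain ⟨b, hb⟩ := exists_basis_sum_inl_eq_apply hR hF hrs
  exact isRectUnimodular_of_basis b fun i => (hb i).trans (Matrix.single_one_vecMul i M)

end RectUnimodular

theorem rectUnimodular_iff_span_minors_eq_top_general {R : Type*} [CommRing R]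
    (hR : HasStableRangeTwo R) {n m : ℕ} (h : n ≤ m) (M : Matrix (Fin n) (Fin m) R) :
    IsRectUnimodular h M ↔ maximalMinorsIdeal M = ⊤ := by
  rw [maximalMinorsIdeal_eq_top_iff_exists_mul_eq_one]
  exact ⟨IsRectUnimodular.exists_mul_eq_one, fun ⟨_, hMN⟩ => isRectUnimodular_of_mul_eq_one hR hMN⟩

/-- over a Dedekind domain `D`, a matrix `M ∈ Mat_{n×m}(D)` (with `n < m`) is
rectangular unimodular if and only if the ideal generated by all `n × n` minors of `M` is
all of `D`. -/
theorem rectUnimodular_iff_span_minors_eq_top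
    {D : Type*} [CommRing D] [IsDomain D] [IsDedekindDomain D]
    (n m : ℕ) (hn : 0 < n) (hnm : n < m) (M : Matrix (Fin n) (Fin m) D) :
    IsRectUnimodular hnm.le M ↔
      Ideal.span {d : D | ∃ c : Fin n ↪ Fin m, d = (M.submatrix id ⇑c).det} = ⊤ := by
  exact rectUnimodular_iff_span_minors_eq_top_general hasStableRangeTwo_of_dimensionLEOne hnm.le M
end

section
/- Let R be an integral domain and n a positive integer. Let X be the n × n matrix over the polynomial ring R[x_{1,1}, …, x_{n,n}] whose (i,j) entry is the variable x_{i,j}. Then det(X) is an irreducible element of R[x_{1,1}, …, x_{n,n}]. -/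
/-!
Let `det X = f * g`. For a fixed row, `det X` is homogeneous of degree one in the variables of that
row; over a domain such partial degrees are additive on products, so `f` and `g` cannot both involve
variables of the row. The same holds for columns. Every variable occurs in `det X`, hence in `f` or
in `g`. If `f` involves `x i j`, then `g` involves no variable of row `i`, so `f` involves all of
them; thus `f` meets every column and `g` involves no variable at all. Since `det X` takes the
value `1` at the identity matrix, the constant `g` is a unit.
-/

open MvPolynomial
open scoped Polynomial

section WeightedDegree

variable {σ R : Type*} [CommSemiring R]

/-- The substitution `x i ↦ x i * T ^ w i`, with values in the polynomials in `T`. The coefficient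
of `T ^ n` in the image of `p` is the component of `p` of weight `n`, so that weighted degrees
become degrees in the single variable `T`. -/
noncomputable def weightScaling (w : σ → ℕ) : MvPolynomial σ R →ₐ[R] (MvPolynomial σ R)[X] :=
  aeval fun i ↦ Polynomial.C (X i) * Polynomial.X ^ w i

lemma weightScaling_monomial (w : σ → ℕ) (d : σ →₀ ℕ) (r : R) :
    weightScaling w (monomial d r) =
      Polynomial.C (monomial d r) * Polynomial.X ^ Finsupp.weight w d := by
  have hpow : (d.prod fun i k ↦ (Polynomial.X ^ (w i * k) : (MvPolynomial σ R)[X])) =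
      Polynomial.X ^ Finsupp.weight w d := by
    simp only [Finsupp.weight_apply, Finsupp.sum, Finsupp.prod, Finset.prod_pow_eq_pow_sum,
      smul_eq_mul, mul_comm]
  rw [weightScaling, aeval_monomial, monomial_eq, map_mul, ← hpow, mul_assoc]
  simp only [mul_pow, ← pow_mul, Finsupp.prod_mul, map_finsuppProd, map_pow,
    Polynomial.algebraMap_apply, algebraMap_eq]

lemma coeff_weightScaling (w : σ → ℕ) (p : MvPolynomial σ R) (n : ℕ) :
    (weightScaling w p).coeff n = weightedHomogeneousComponent w n p := by
  induction p using MvPolynomial.induction_on' with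
  | monomial d r =>
    rw [weightScaling_monomial, Polynomial.coeff_C_mul_X_pow,
      weightedHomogeneousComponent_of_mem (isWeightedHomogeneous_monomial w d r rfl)]
  | add p q hp hq => rw [map_add, map_add, Polynomial.coeff_add, hp, hq]

lemma natDegree_weightScaling (w : σ → ℕ) (p : MvPolynomial σ R) :
    (weightScaling w p).natDegree = weightedTotalDegree w p := by
  apply le_antisymm
  · refine Polynomial.natDegree_le_iff_coeff_eq_zero.mpr fun n hn ↦ ?_
    rw [coeff_weightScaling, weightedHomogeneousComponent_eq_zero n p hn]
  · refine Finset.sup_le fun d hd ↦ Polynomial.le_natDegree_of_ne_zero fun hzero ↦ ?_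
    rw [coeff_weightScaling] at hzero
    have hcoeff := coeff_weightedHomogeneousComponent (w := w) (Finsupp.weight w d) p d
    rw [hzero, if_pos rfl, coeff_zero] at hcoeff
    exact mem_support_iff.mp hd hcoeff.symm

lemma weightScaling_ne_zero (w : σ → ℕ) {p : MvPolynomial σ R} (hp : p ≠ 0) :
    weightScaling w p ≠ 0 := by
  intro hzero
  refine hp ?_
  rw [← sum_weightedHomogeneousComponent w p]
  simp [← coeff_weightScaling, hzero]

lemma weightedTotalDegree_mul_of_noZeroDivisors [NoZeroDivisors R] (w : σ → ℕ)
    {p q : MvPolynomial σ R} (hp : p ≠ 0) (hq : q ≠ 0) :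
    weightedTotalDegree w (p * q) = weightedTotalDegree w p + weightedTotalDegree w q := by
  simp only [← natDegree_weightScaling, map_mul]
  exact Polynomial.natDegree_mul (weightScaling_ne_zero w hp) (weightScaling_ne_zero w hq)

lemma le_weightedTotalDegree_of_mem_vars (w : σ → ℕ) {p : MvPolynomial σ R} {i : σ}
    (hi : i ∈ p.vars) : w i ≤ weightedTotalDegree w p := by
  obtain ⟨d, hd, hid⟩ := (mem_vars_iff_mem_support i).mp hi
  exact (Finsupp.le_weight_of_ne_zero' w (Finsupp.mem_support_iff.mp hid)).trans
    (le_weightedTotalDegree w hd)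

lemma add_le_of_isWeightedHomogeneous_mul [NoZeroDivisors R] {w : σ → ℕ} {n : ℕ}
    {p q : MvPolynomial σ R} (hpq : p * q ≠ 0) (hhom : IsWeightedHomogeneous w (p * q) n) {i j : σ}
    (hi : i ∈ p.vars) (hj : j ∈ q.vars) : w i + w j ≤ n :=
  calc w i + w j ≤ weightedTotalDegree w p + weightedTotalDegree w q :=
        add_le_add (le_weightedTotalDegree_of_mem_vars w hi)
          (le_weightedTotalDegree_of_mem_vars w hj)
    _ = weightedTotalDegree w (p * q) :=
        (weightedTotalDegree_mul_of_noZeroDivisors w (left_ne_zero_of_mul hpq)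
          (right_ne_zero_of_mul hpq)).symm
    _ ≤ n := Finset.sup_le fun _ hd ↦ (hhom (mem_support_iff.mp hd)).le

end WeightedDegree

lemma isUnit_of_dvd_of_vars_eq_empty {σ R : Type*} [CommSemiring R] {p q : MvPolynomial σ R}
    (hdvd : p ∣ q) (hp : p.vars = ∅) {s : σ → R} (hq : IsUnit (eval s q)) : IsUnit p := by
  rw [vars_eq_empty_iff_eq_C] at hp
  rw [hp] at hdvd ⊢
  have hunit := isUnit_of_dvd_unit (map_dvd (eval s) hdvd) hq
  rw [eval_C] at hunit
  exact hunit.map C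

lemma isWeightedHomogeneous_det {σ R M m : Type*} [CommRing R] [AddCommMonoid M] [Fintype m]
    [DecidableEq m] {w : σ → M} {A : Matrix m m (MvPolynomial σ R)} {r c : m → M}
    (hA : ∀ i j, IsWeightedHomogeneous w (A i j) (r i + c j)) :
    IsWeightedHomogeneous w A.det (∑ i, r i + ∑ j, c j) := by
  rw [Matrix.det_apply']
  refine IsWeightedHomogeneous.sum _ _ _ fun τ _ ↦ ?_
  have hprod := IsWeightedHomogeneous.prod Finset.univ _ _ fun i _ ↦ hA (τ i) i
  rw [Finset.sum_add_distrib, Equiv.sum_comp τ r] at hprod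
  rw [← map_intCast (C : R →+* MvPolynomial σ R)]
  exact hprod.C_mul _

section GenericDet

variable {m R : Type*} [Fintype m] [DecidableEq m] [CommRing R]

lemma not_isUnit_det_mvPolynomialX [Nontrivial R] [Nonempty m] :
    ¬IsUnit (Matrix.mvPolynomialX m m R).det := by
  intro hunit
  have heval : eval (0 : m × m → R) (Matrix.mvPolynomialX m m R).det = 0 :=
    (Matrix.eval_det_mvPolynomialX m R 0).trans Matrix.det_zero
  exact not_isUnit_zero (heval ▸ hunit.map (eval 0))

lemma mem_vars_det_mvPolynomialX [Nontrivial R] (i j : m) :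
    (i, j) ∈ (Matrix.mvPolynomialX m m R).det.vars := by
  by_contra hij
  -- `P` and `P.updateRow i 0` differ only in the entry `(i, j)`.
  let P : Matrix m m R := (Equiv.swap i j).permMatrix R
  have hP : IsUnit P.det := by
    rw [Matrix.det_permutation]
    exact (Equiv.swap i j).sign.isUnit.map (Int.castRingHom R)
  have hP_zero : (P.updateRow i 0).det = 0 :=
    Matrix.det_eq_zero_of_row_eq_zero i fun l ↦ by simp
  have heval : eval (fun kl ↦ P kl.1 kl.2) (Matrix.mvPolynomialX m m R).det =
      eval (fun kl ↦ P.updateRow i 0 kl.1 kl.2) (Matrix.mvPolynomialX m m R).det := by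
    refine eval₂Hom_congr' rfl ?_ rfl
    rintro ⟨k, l⟩ hkl -
    obtain rfl | hki := eq_or_ne k i
    · have hlj : j ≠ l := by
        rintro rfl
        exact hij hkl
      simp [P, PEquiv.toMatrix_apply, Equiv.toPEquiv_apply, hlj]
    · simp [hki]
  rw [Matrix.eval_det_mvPolynomialX, Matrix.eval_det_mvPolynomialX] at heval
  exact hP.ne_zero (heval.trans hP_zero)

lemma isWeightedHomogeneous_det_mvPolynomialX {M : Type*} [AddCommMonoid M] (r c : m → M) :
    IsWeightedHomogeneous (fun ij : m × m ↦ r ij.1 + c ij.2) (Matrix.mvPolynomialX m m R).det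
      (∑ i, r i + ∑ j, c j) :=
  isWeightedHomogeneous_det fun i j ↦ isWeightedHomogeneous_X R _ (i, j)

variable {f g : MvPolynomial (m × m) R}

lemma mem_vars_or_mem_vars_of_mul_eq_det [Nontrivial R]
    (hfg : f * g = (Matrix.mvPolynomialX m m R).det) (p : m × m) : p ∈ f.vars ∨ p ∈ g.vars := by
  have hp := mem_vars_det_mvPolynomialX (R := R) p.1 p.2
  rw [← hfg] at hp
  exact Finset.mem_union.mp (vars_mul f g hp)

variable [IsDomain R]

lemma add_le_sum_add_sum_of_mul_eq_det (hfg : f * g = (Matrix.mvPolynomialX m m R).det)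
    (r c : m → ℕ) {p q : m × m} (hp : p ∈ f.vars) (hq : q ∈ g.vars) :
    (r p.1 + c p.2) + (r q.1 + c q.2) ≤ ∑ i, r i + ∑ j, c j := by
  have hhom := isWeightedHomogeneous_det_mvPolynomialX (R := R) r c
  have hne := Matrix.det_mvPolynomialX_ne_zero m R
  rw [← hfg] at hhom hne
  exact add_le_of_isWeightedHomogeneous_mul hne hhom hp hq

lemma fst_ne_of_mem_vars_of_mul_eq_det (hfg : f * g = (Matrix.mvPolynomialX m m R).det)
    {p q : m × m} (hp : p ∈ f.vars) (hq : q ∈ g.vars) : p.1 ≠ q.1 := by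
  intro hrow
  have hle := add_le_sum_add_sum_of_mul_eq_det hfg (Pi.single p.1 1) 0 hp hq
  simp [← hrow] at hle

lemma snd_ne_of_mem_vars_of_mul_eq_det (hfg : f * g = (Matrix.mvPolynomialX m m R).det)
    {p q : m × m} (hp : p ∈ f.vars) (hq : q ∈ g.vars) : p.2 ≠ q.2 := by
  intro hcol
  have hle := add_le_sum_add_sum_of_mul_eq_det hfg 0 (Pi.single p.2 1) hp hq
  simp [← hcol] at hle

lemma vars_eq_empty_of_mul_eq_det (hfg : f * g = (Matrix.mvPolynomialX m m R).det)
    {p : m × m} (hp : p ∈ f.vars) : g.vars = ∅ := by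
  refine Finset.eq_empty_of_forall_notMem fun q hq ↦ ?_
  have hcorner : (p.1, q.2) ∈ f.vars :=
    (mem_vars_or_mem_vars_of_mul_eq_det hfg (p.1, q.2)).resolve_right fun hg ↦
      fst_ne_of_mem_vars_of_mul_eq_det hfg hp hg rfl
  exact snd_ne_of_mem_vars_of_mul_eq_det hfg hcorner hq rfl

lemma isUnit_right_of_mul_eq_det (hfg : f * g = (Matrix.mvPolynomialX m m R).det)
    {p : m × m} (hp : p ∈ f.vars) : IsUnit g := by
  have heval : eval (fun ij ↦ (1 : Matrix m m R) ij.1 ij.2) (Matrix.mvPolynomialX m m R).det = 1 :=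
    (Matrix.eval_det_mvPolynomialX m R _).trans Matrix.det_one
  exact isUnit_of_dvd_of_vars_eq_empty (Dvd.intro_left f hfg) (vars_eq_empty_of_mul_eq_det hfg hp)
    (heval ▸ isUnit_one)

end GenericDet

theorem det_generic_matrix_irreducible_general {m R : Type*} [Fintype m] [DecidableEq m]
    [Nonempty m] [CommRing R] [IsDomain R] : Irreducible (Matrix.mvPolynomialX m m R).det := by
  refine ⟨not_isUnit_det_mvPolynomialX, fun f g hfg ↦ ?_⟩
  obtain ⟨i⟩ := ‹Nonempty m›
  rcases mem_vars_or_mem_vars_of_mul_eq_det hfg.symm (i, i) with hf | hg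
  · exact Or.inr (isUnit_right_of_mul_eq_det hfg.symm hf)
  · exact Or.inl (isUnit_right_of_mul_eq_det ((mul_comm g f).trans hfg.symm) hg)

/-- the determinant of the generic `n × n` matrix, whose `(i,j)` entry is the
variable `x_{i,j}` of the polynomial ring `R[x_{1,1}, …, x_{n,n}]`, is irreducible. -/
theorem det_generic_matrix_irreducible {R : Type*} [CommRing R] [IsDomain R]
    (n : ℕ) (hn : 0 < n) :
    Irreducible
      (Matrix.det
        (Matrix.of fun i j : Fin n =>
          (MvPolynomial.X (i, j) : MvPolynomial (Fin n × Fin n) R))) := by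
  have : Nonempty (Fin n) := ⟨⟨0, hn⟩⟩
  exact det_generic_matrix_irreducible_general
end

section
/- Let d and M be positive integers and let f, g ∈ ℤ[x_1, …, x_d] be coprime polynomials (having no common nonconstant factor). Define S_M(f,g) = { a ∈ ℤ^d : f(a) ≡ g(a) ≡ 0 (mod p) for some prime p > M }. Then the upper density ρ̄(S_M(f,g)) tends to 0 as M → ∞. -/
open Filter

/-- The upper density of a set `S ⊆ ℤ^d`:
`ρ̄(S) = limsup_{B→∞} |S ∩ [−B,B)^d| / (2B)^d`. -/
noncomputable def upperDensity {d : ℕ} (S : Set (Fin d → ℤ)) : ℝ :=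
  limsup
    (fun B : ℕ =>
      (Nat.card {a : Fin d → ℤ // a ∈ S ∧ ∀ i, -(B : ℤ) ≤ a i ∧ a i < B} : ℝ) /
        (2 * (B : ℝ)) ^ d)
    atTop

/-!
By splitting `g` into irreducible factors it suffices to treat an irreducible `h` with `h ∤ f`, and
this is done by induction on the number of variables.

* If `h = h(b)` does not involve the first variable, some coefficient `c` of `f`, as a polynomial in
  that variable, is not divisible by `h`. A point `(x, b)` of `S_M(f, h)` then has `h(b) = 0`, which
  is rare by Schwartz–Zippel; or `b ∈ S_M(c, h)`, which is rare by induction; or its prime `p`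
  divides `h(b) ≠ 0` while `f(·, b)` is nonzero modulo `p`. In the last case `x` lies in boundedly
  many residue classes modulo `p`, so each fiber contains `O(∑ (2B/p + 1))` points, the sum running
  over the primes `p > M` dividing `h(b)`. The terms with `p ≤ B` contribute `O(B/M)` on average
  over `b`, because `p ∣ h(b)` has probability `O(1/p)` and `∑_{p > M} 1/p² = O(1/M)`. The other
  terms are `O(1)`, and there are only `O(log B)` of them because `h(b)` is polynomially bounded
  in `B`.
* Otherwise the resultant of `f` and `h` with respect to the first variable is a nonzero `r(b)` in
  the ideal `(f, h)`, so `S_M(f, h) ⊆ S_M(h, r)`. The irreducible factors of `r` do not involve the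
  first variable and do not divide `h`, so the first case applies to them.
-/

namespace EkedahlSieve

open MvPolynomial Finset

section Elimination

theorem exists_mul_add_mul_eq_C_of_irreducible {R : Type*} [CommRing R] [IsDomain R]
    [IsGCDMonoid R] {f h : Polynomial R} (hh : Irreducible h) (hdeg : h.natDegree ≠ 0)
    (hf : ¬ h ∣ f) : ∃ u v : Polynomial R, ∃ r ≠ 0, u * f + v * h = Polynomial.C r := by
  let φ := algebraMap R (FractionRing R)
  have hφ : Function.Injective φ := IsFractionRing.injective R (FractionRing R)
  have hprim : h.IsPrimitive := hh.isPrimitive hdeg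
  have hcoprime : IsCoprime (f.map φ) (h.map φ) := by
    refine .symm ((Irreducible.coprime_iff_not_dvd ?_).2 fun hdvd => hf ?_)
    · exact hprim.irreducible_iff_irreducible_map_fraction_map.1 hh
    · exact hprim.dvd_of_fraction_map_dvd_fraction_map hdvd
  have hres : f.resultant h ≠ 0 := by
    have hmap := Polynomial.resultant_ne_zero _ _ hcoprime
    rw [Polynomial.natDegree_map_eq_of_injective hφ, Polynomial.natDegree_map_eq_of_injective hφ,
      Polynomial.resultant_map_map] at hmap
    exact fun h0 => hmap (by rw [h0, map_zero])
  obtain ⟨u, v, -, -, huv⟩ :=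
    Polynomial.exists_mul_add_mul_eq_C_resultant f h le_rfl le_rfl (.inr hdeg)
  exact ⟨u, v, _, hres, by rw [← huv]; ring⟩

variable {n : ℕ} {R : Type*}

section CommSemiring

variable [CommSemiring R]

theorem finSuccEquiv_rename_succ (r : MvPolynomial (Fin n) R) :
    finSuccEquiv R n (rename Fin.succ r) = Polynomial.C r := by
  induction r using MvPolynomial.induction_on with
  | C a => simp [finSuccEquiv_apply]
  | add p q hp hq => simp only [map_add, hp, hq]
  | mul_X p i hp => simp only [map_mul, hp, rename_X, finSuccEquiv_X_succ]

theorem exists_rename_succ_eq_of_degreeOf_zero_eq_zero {f : MvPolynomial (Fin (n + 1)) R}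
    (hf : degreeOf 0 f = 0) : ∃ r : MvPolynomial (Fin n) R, rename Fin.succ r = f := by
  rw [← natDegree_finSuccEquiv, Polynomial.natDegree_eq_zero] at hf
  obtain ⟨r, hr⟩ := hf
  exact ⟨r, (finSuccEquiv R n).injective (by rw [finSuccEquiv_rename_succ, hr])⟩

theorem rename_succ_dvd_iff_dvd_coeff {r : MvPolynomial (Fin n) R}
    {f : MvPolynomial (Fin (n + 1)) R} :
    rename Fin.succ r ∣ f ↔ ∀ i, r ∣ (finSuccEquiv R n f).coeff i := by
  rw [← map_dvd_iff (finSuccEquiv R n), finSuccEquiv_rename_succ,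
    Polynomial.C_dvd_iff_dvd_coeff]

theorem degreeOf_le_degreeOf_of_dvd {σ : Type*} [NoZeroDivisors R] {f g : MvPolynomial σ R}
    (i : σ) (hg : g ≠ 0) (hfg : f ∣ g) : degreeOf i f ≤ degreeOf i g := by
  obtain ⟨q, rfl⟩ := hfg
  rw [degreeOf_mul_eq (left_ne_zero_of_mul hg) (right_ne_zero_of_mul hg)]
  exact Nat.le_add_right _ _

end CommSemiring

variable [CommRing R]

theorem irreducible_of_irreducible_rename_succ {r : MvPolynomial (Fin n) R}
    (hr : Irreducible (rename Fin.succ r)) : Irreducible r := by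
  rw [← MulEquiv.irreducible_iff (finSuccEquiv R n), finSuccEquiv_rename_succ] at hr
  exact hr.of_map

theorem exists_mul_add_mul_eq_rename_succ [IsDomain R]
    [IsGCDMonoid (MvPolynomial (Fin n) R)] {f h : MvPolynomial (Fin (n + 1)) R}
    (hh : Irreducible h) (hdeg : degreeOf 0 h ≠ 0) (hf : ¬ h ∣ f) :
    ∃ u v : MvPolynomial (Fin (n + 1)) R, ∃ r ≠ 0, u * f + v * h = rename Fin.succ r := by
  let E := finSuccEquiv R n
  obtain ⟨u, v, r, hr, huv⟩ := exists_mul_add_mul_eq_C_of_irreducible (f := E f) (h := E h)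
    ((MulEquiv.irreducible_iff E).2 hh) (by rwa [natDegree_finSuccEquiv])
    (by rwa [map_dvd_iff E])
  refine ⟨E.symm u, E.symm v, r, hr, E.injective ?_⟩
  simp only [map_add, map_mul, E.apply_symm_apply, huv, E, finSuccEquiv_rename_succ]

end Elimination

section Density

variable {n : ℕ}

/-- The half-open box `[-B, B)^n` over which densities in `ℤ^n` are measured. -/
noncomputable def box (n B : ℕ) : Finset (Fin n → ℤ) :=
  Fintype.piFinset fun _ => Ico (-(B : ℤ)) B

open Classical in
/-- The number of points of `S` in the box `[-B, B)^n`. -/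
noncomputable def boxCount (S : Set (Fin n → ℤ)) (B : ℕ) : ℕ :=
  #{a ∈ box n B | a ∈ S}

/-- The sets `S M ⊆ ℤ^n` have upper density tending to `0` as `M → ∞`, in a form that involves no
`limsup`: the threshold for the box size may depend on `M`. -/
def HasVanishingDensity (S : ℕ → Set (Fin n → ℤ)) : Prop :=
  ∀ ε : ℝ, 0 < ε → ∀ᶠ M in atTop, ∀ᶠ B : ℕ in atTop, boxCount (S M) B ≤ ε * (2 * (B : ℝ)) ^ n

theorem card_Ico_neg_self (B : ℕ) : #(Ico (-(B : ℤ)) B) = 2 * B := by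
  rw [Int.card_Ico]
  lia

theorem card_box (n B : ℕ) : #(box n B) = (2 * B) ^ n := by
  rw [box, Fintype.card_piFinset_const, card_Ico_neg_self]

theorem boxCount_setOf (P : (Fin n → ℤ) → Prop) [DecidablePred P] (B : ℕ) :
    boxCount {a | P a} B = #{a ∈ box n B | P a} := by
  simp only [boxCount, Set.mem_ofPred_eq]

theorem boxCount_mono {S T : Set (Fin n → ℤ)} (hST : S ⊆ T) (B : ℕ) :
    boxCount S B ≤ boxCount T B := by
  classical
  exact card_le_card (monotone_filter_right _ fun _ _ ha => hST ha)

theorem boxCount_union_le (S T : Set (Fin n → ℤ)) (B : ℕ) :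
    boxCount (S ∪ T) B ≤ boxCount S B + boxCount T B := by
  classical
  simp only [boxCount, Set.mem_union, filter_or]
  exact card_union_le _ _

theorem boxCount_preimage_tail (S : Set (Fin n → ℤ)) (B : ℕ) :
    boxCount (Fin.tail ⁻¹' S) B = 2 * B * boxCount S B := by
  classical
  rw [← card_Ico_neg_self]
  exact card_consEquiv_filter_piFinset (fun _ => Ico (-(B : ℤ)) B) (· ∈ S)

open Classical in
theorem boxCount_succ (S : Set (Fin (n + 1) → ℤ)) (B : ℕ) :
    boxCount S B = ∑ b ∈ box n B, #{x ∈ Ico (-(B : ℤ)) B | Fin.cons x b ∈ S} := by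
  rw [boxCount, ← card_sigma]
  refine card_bij' (fun a _ => ⟨Fin.tail a, a 0⟩) (fun c _ => Fin.cons c.2 c.1) ?_ ?_ ?_ ?_
  · intro a ha
    simp only [box, mem_filter, Fin.mem_piFinset_iff_zero_tail] at ha
    simpa only [mem_sigma, mem_filter, Fin.cons_self_tail] using ⟨ha.1.2, ha.1.1, ha.2⟩
  · rintro ⟨b, x⟩ hbx
    simp only [mem_sigma, mem_filter] at hbx
    simp only [box, mem_filter, Fin.mem_piFinset_iff_zero_tail, Fin.cons_zero, Fin.tail_cons]
    exact ⟨⟨hbx.2.1, hbx.1⟩, hbx.2.2⟩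
  · exact fun a _ => Fin.cons_self_tail a
  · simp only [Fin.tail_cons, Fin.cons_zero, implies_true]

theorem natCard_eq_boxCount (S : Set (Fin n → ℤ)) (B : ℕ) :
    Nat.card {a : Fin n → ℤ // a ∈ S ∧ ∀ i, -(B : ℤ) ≤ a i ∧ a i < B} = boxCount S B := by
  classical
  refine Nat.subtype_card _ fun a => ?_
  simp only [box, mem_filter, Fintype.mem_piFinset, mem_Ico, and_comm]

namespace HasVanishingDensity

variable {S T : ℕ → Set (Fin n → ℤ)}

theorem mono (hT : HasVanishingDensity T) (hST : ∀ᶠ M in atTop, S M ⊆ T M) :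
    HasVanishingDensity S := by
  intro ε hε
  filter_upwards [hT ε hε, hST] with M hM hsub
  filter_upwards [hM] with B hB
  exact (Nat.cast_le.2 (boxCount_mono hsub B)).trans hB

theorem union (hS : HasVanishingDensity S) (hT : HasVanishingDensity T) :
    HasVanishingDensity fun M => S M ∪ T M := by
  intro ε hε
  filter_upwards [hS (ε / 2) (half_pos hε), hT (ε / 2) (half_pos hε)] with M hSM hTM
  filter_upwards [hSM, hTM] with B hSB hTB
  calc (boxCount (S M ∪ T M) B : ℝ)
      ≤ boxCount (S M) B + boxCount (T M) B := mod_cast boxCount_union_le _ _ B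
    _ ≤ ε / 2 * (2 * B) ^ n + ε / 2 * (2 * B) ^ n := add_le_add hSB hTB
    _ = ε * (2 * B) ^ n := by ring

theorem preimage_tail (hS : HasVanishingDensity S) :
    HasVanishingDensity fun M => Fin.tail ⁻¹' S M := by
  intro ε hε
  filter_upwards [hS ε hε] with M hM
  filter_upwards [hM] with B hB
  calc (boxCount (Fin.tail ⁻¹' S M) B : ℝ)
      = 2 * B * boxCount (S M) B := mod_cast boxCount_preimage_tail (S M) B
    _ ≤ 2 * B * (ε * (2 * B) ^ n) := by gcongr
    _ = ε * (2 * B) ^ (n + 1) := by ring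

theorem of_eventually_eq_empty (hS : ∀ᶠ M in atTop, S M = ∅) : HasVanishingDensity S := by
  intro ε hε
  filter_upwards [hS] with M hM
  refine .of_forall fun B => ?_
  simp only [hM, boxCount, Set.mem_empty_iff_false, filter_false, card_empty, Nat.cast_zero]
  positivity

theorem tendsto_upperDensity (hS : HasVanishingDensity S) :
    Tendsto (fun M => upperDensity (S M)) atTop (nhds 0) := by
  rw [Metric.tendsto_nhds]
  intro ε hε
  filter_upwards [hS (ε / 2) (half_pos hε)] with M hM
  let u : ℕ → ℝ := fun B => boxCount (S M) B / (2 * (B : ℝ)) ^ n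
  have hlimsup : upperDensity (S M) = limsup u atTop := by
    simp only [upperDensity, natCard_eq_boxCount, u]
  have hnonneg : ∀ B, 0 ≤ u B := fun B => by positivity
  have hle : ∀ᶠ B in atTop, u B ≤ ε / 2 := by
    filter_upwards [hM] with B hB
    exact div_le_of_le_mul₀ (by positivity) (by positivity) hB
  have hlimsup_le : limsup u atTop ≤ ε / 2 :=
    limsup_le_of_le (isCoboundedUnder_le_of_le atTop hnonneg) hle
  have hlimsup_nonneg : 0 ≤ limsup u atTop :=
    le_limsup_of_frequently_le (.of_forall hnonneg) (isBoundedUnder_of_eventually_le hle)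
  rw [hlimsup, Real.dist_eq, sub_zero, abs_of_nonneg hlimsup_nonneg]
  linarith

end HasVanishingDensity

end Density

section Counting

theorem card_filter_intCast_eq_le {a b : ℤ} (hab : a ≤ b) {m : ℕ} (hm : 0 < m) (r : ZMod m) :
    (#{x ∈ Ico a b | ((x : ℤ) : ZMod m) = r} : ℝ) ≤ (b - a) / m + 1 := by
  obtain ⟨v, rfl⟩ := ZMod.intCast_surjective r
  have hm' : (0 : ℚ) < m := mod_cast hm
  have hcount := Int.Ico_filter_modEq_card a b (Int.natCast_pos.2 hm) v
  have hceil_lt := Int.ceil_lt_add_one ((b - v : ℚ) / (m : ℤ))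
  have hle_ceil := Int.le_ceil ((a - v : ℚ) / (m : ℤ))
  have hdiv : (b - v : ℚ) / m - (a - v) / m = (b - a) / m := by ring
  have hnonneg : (0 : ℚ) ≤ (b - a) / m := div_nonneg (by exact_mod_cast sub_nonneg.2 hab) hm'.le
  have hle : (#{x ∈ Ico a b | x ≡ v [ZMOD m]} : ℚ) ≤ (b - a) / m + 1 := by
    rw [← Int.cast_natCast, hcount, Int.cast_max]
    push_cast at hceil_lt hle_ceil ⊢
    exact max_le (by linarith) (by linarith)
  simp only [ZMod.intCast_eq_intCast_iff]
  exact_mod_cast (Rat.cast_le (K := ℝ)).2 hle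

theorem card_filter_dvd_eval_le {a b : ℤ} (hab : a ≤ b) {p : ℕ} (hp : p.Prime) {F : Polynomial ℤ}
    (hF : F.map (Int.castRingHom (ZMod p)) ≠ 0) :
    (#{x ∈ Ico a b | (p : ℤ) ∣ F.eval x} : ℝ) ≤ F.natDegree * ((b - a) / p + 1) := by
  have := Fact.mk hp
  set G := F.map (Int.castRingHom (ZMod p))
  have hcover : {x ∈ Ico a b | (p : ℤ) ∣ F.eval x} ⊆
      G.roots.toFinset.biUnion fun r => {x ∈ Ico a b | ((x : ℤ) : ZMod p) = r} := by
    intro x hx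
    simp only [mem_filter, mem_biUnion, Multiset.mem_toFinset] at hx ⊢
    refine ⟨x, ?_, hx.1, rfl⟩
    rw [Polynomial.mem_roots hF, Polynomial.IsRoot, Polynomial.eval_intCast_map]
    exact (ZMod.intCast_zmod_eq_zero_iff_dvd _ _).2 hx.2
  have hroots : #G.roots.toFinset ≤ F.natDegree :=
    (Multiset.toFinset_card_le _).trans (G.card_roots'.trans Polynomial.natDegree_map_le)
  have hnonneg : (0 : ℝ) ≤ b - a := by exact_mod_cast sub_nonneg.2 hab
  calc (#{x ∈ Ico a b | (p : ℤ) ∣ F.eval x} : ℝ)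
      ≤ ∑ r ∈ G.roots.toFinset, (#{x ∈ Ico a b | ((x : ℤ) : ZMod p) = r} : ℝ) :=
        mod_cast (card_le_card hcover).trans card_biUnion_le
    _ ≤ ∑ _r ∈ G.roots.toFinset, ((b - a) / p + 1 : ℝ) :=
        sum_le_sum fun r _ => card_filter_intCast_eq_le hab hp.pos r
    _ = #G.roots.toFinset * ((b - a) / p + 1 : ℝ) := by rw [sum_const, nsmul_eq_mul]
    _ ≤ F.natDegree * ((b - a) / p + 1) := by gcongr

theorem card_filter_eval_eq_zero_mul_card_le {R : Type*} [CommRing R] [IsDomain R] [DecidableEq R]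
    {n : ℕ} {h : MvPolynomial (Fin n) R} (hh : h ≠ 0) (S : Finset R) :
    #{a ∈ Fintype.piFinset fun _ => S | eval a h = 0} * #S ≤ h.totalDegree * #S ^ n := by
  rcases S.eq_empty_or_nonempty with rfl | hS
  · simp
  · have hcard : (0 : ℚ≥0) < #S := mod_cast hS.card_pos
    have hsz := schwartz_zippel_totalDegree hh S
    rw [div_le_div_iff₀ (pow_pos hcard n) hcard] at hsz
    exact_mod_cast hsz

variable {n : ℕ}

theorem boxCount_zeroLocus_mul_le {h : MvPolynomial (Fin n) ℤ} (hh : h ≠ 0) (B : ℕ) :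
    boxCount {a | eval a h = 0} B * (2 * B) ≤ h.totalDegree * (2 * B) ^ n := by
  rw [boxCount_setOf, ← card_Ico_neg_self]
  exact card_filter_eval_eq_zero_mul_card_le hh _

theorem natCast_dvd_eval_iff {σ : Type*} (h : MvPolynomial σ ℤ) (a : σ → ℤ) (m : ℕ) :
    (m : ℤ) ∣ eval a h ↔
      eval (fun i => (a i : ZMod m)) (map (Int.castRingHom (ZMod m)) h) = 0 := by
  rw [← ZMod.intCast_zmod_eq_zero_iff_dvd, ← eq_intCast (Int.castRingHom (ZMod m)), map_eval]
  rfl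

theorem card_box_filter_intCast_eq_le (B : ℕ) {m : ℕ} (hm : 0 < m) (r : Fin n → ZMod m) :
    (#{a ∈ box n B | (fun i => (a i : ZMod m)) = r} : ℝ) ≤ (2 * B / m + 1) ^ n := by
  have hprod : {a ∈ box n B | (fun i => (a i : ZMod m)) = r} =
      Fintype.piFinset fun i => {x ∈ Ico (-(B : ℤ)) B | ((x : ℤ) : ZMod m) = r i} := by
    ext a
    simp only [box, mem_filter, Fintype.mem_piFinset, funext_iff, forall_and]
  rw [hprod, Fintype.card_piFinset, Nat.cast_prod]
  calc ∏ i, (#{x ∈ Ico (-(B : ℤ)) B | ((x : ℤ) : ZMod m) = r i} : ℝ)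
      ≤ ∏ _i : Fin n, (2 * B / m + 1 : ℝ) := by
        refine prod_le_prod (fun _ _ => Nat.cast_nonneg _) fun i _ => ?_
        have hres := card_filter_intCast_eq_le (a := -B) (b := B) (by lia) hm (r i)
        rwa [Int.cast_neg, sub_neg_eq_add, ← two_mul, Int.cast_natCast] at hres
    _ = (2 * B / m + 1) ^ n := by rw [prod_const, card_univ, Fintype.card_fin]

theorem boxCount_dvd_eval_le (B : ℕ) {p : ℕ} (hp : p.Prime) {h : MvPolynomial (Fin n) ℤ}
    (hh : map (Int.castRingHom (ZMod p)) h ≠ 0) :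
    (boxCount {a | (p : ℤ) ∣ eval a h} B : ℝ) ≤ h.totalDegree * (2 * B + p) ^ n / p := by
  classical
  have := Fact.mk hp
  have hp0 : (0 : ℝ) < p := mod_cast hp.pos
  set G := map (Int.castRingHom (ZMod p)) h
  let Z : Finset (Fin n → ZMod p) := {r | eval r G = 0}
  have hcover : {a ∈ box n B | (p : ℤ) ∣ eval a h} ⊆
      Z.biUnion fun r => {a ∈ box n B | (fun i => (a i : ZMod p)) = r} := by
    intro a ha
    rw [mem_filter, natCast_dvd_eval_iff] at ha
    simp only [mem_biUnion, mem_filter, mem_univ, true_and, Z]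
    exact ⟨_, ha.2, ha.1, rfl⟩
  have hZ : (#Z : ℝ) * p ≤ h.totalDegree * p ^ n := by
    have hsz := card_filter_eval_eq_zero_mul_card_le hh univ
    rw [Fintype.piFinset_univ, card_univ, ZMod.card] at hsz
    have hdeg : G.totalDegree ≤ h.totalDegree := sup_mono (support_map_subset _ _)
    exact_mod_cast hsz.trans (Nat.mul_le_mul_right _ hdeg)
  rw [boxCount_setOf]
  calc (#{a ∈ box n B | (p : ℤ) ∣ eval a h} : ℝ)
      ≤ ∑ r ∈ Z, (#{a ∈ box n B | (fun i => (a i : ZMod p)) = r} : ℝ) :=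
        mod_cast (card_le_card hcover).trans card_biUnion_le
    _ ≤ #Z * (2 * B / p + 1) ^ n := by
        rw [← nsmul_eq_mul]
        exact sum_le_card_nsmul _ _ _ fun r _ => card_box_filter_intCast_eq_le B hp.pos r
    _ = #Z * p * ((2 * B + p) ^ n / p ^ n) / p := by
        rw [← div_pow, add_div, div_self hp0.ne']
        field_simp
    _ ≤ h.totalDegree * p ^ n * ((2 * B + p) ^ n / p ^ n) / p := by gcongr
    _ = h.totalDegree * (2 * B + p) ^ n / p := by field_simp

end Counting

section Primes

variable {n : ℕ}

theorem eventually_not_natCast_dvd {c : ℤ} (hc : c ≠ 0) : ∀ᶠ p : ℕ in atTop, ¬ (p : ℤ) ∣ c := by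
  filter_upwards [eventually_gt_atTop c.natAbs] with p hp hdvd
  exact hp.not_ge (Nat.le_of_dvd (Int.natAbs_pos.2 hc) (Int.natCast_dvd.1 hdvd))

theorem eventually_map_castRingHom_ne_zero {σ : Type*} {h : MvPolynomial σ ℤ} (hh : h ≠ 0) :
    ∀ᶠ p : ℕ in atTop, map (Int.castRingHom (ZMod p)) h ≠ 0 := by
  obtain ⟨m, hm⟩ := ne_zero_iff.1 hh
  filter_upwards [eventually_not_natCast_dvd hm] with p hp
  refine ne_zero_iff.2 ⟨m, ?_⟩
  rwa [coeff_map, eq_intCast, Ne, ZMod.intCast_zmod_eq_zero_iff_dvd]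

theorem two_pow_card_primeFactors_le {N : ℕ} (hN : N ≠ 0) : 2 ^ #N.primeFactors ≤ N :=
  (pow_card_le_prod _ _ _ fun _ hp => (Nat.prime_of_mem_primeFactors hp).two_le).trans
    (Nat.le_of_dvd (Nat.pos_of_ne_zero hN) (Nat.prod_primeFactors_dvd N))

theorem natAbs_eval_le {h : MvPolynomial (Fin n) ℤ} {B : ℕ} (hB : 0 < B) {a : Fin n → ℤ}
    (ha : a ∈ box n B) :
    (eval a h).natAbs ≤ (∑ m ∈ h.support, (h.coeff m).natAbs) * B ^ h.totalDegree := by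
  have habs (i : Fin n) : (a i).natAbs ≤ B := by
    have := mem_Ico.1 (Fintype.mem_piFinset.1 ha i)
    lia
  have hmonomial {m : Fin n →₀ ℕ} (hm : m ∈ h.support) :
      (∏ i, a i ^ m i).natAbs ≤ B ^ h.totalDegree := by
    calc (∏ i, a i ^ m i).natAbs
        = ∏ i, (a i).natAbs ^ m i := by
          simp only [← Int.natAbsHom_apply, map_prod, map_pow]
      _ ≤ ∏ i, B ^ m i := prod_le_prod' fun i _ => Nat.pow_le_pow_left (habs i) _
      _ = B ^ m.degree := by rw [prod_pow_eq_pow_sum, Finsupp.degree_eq_sum]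
      _ ≤ B ^ h.totalDegree := Nat.pow_le_pow_right hB (le_totalDegree hm)
  rw [eval_eq', sum_mul]
  refine (Int.natAbs_sum_le _ _).trans (sum_le_sum fun m hm => ?_)
  rw [Int.natAbs_mul]
  exact Nat.mul_le_mul_left _ (hmonomial hm)

theorem eventually_card_primeFactors_eval_le (h : MvPolynomial (Fin n) ℤ) {ε : ℝ} (hε : 0 < ε) :
    ∀ᶠ B : ℕ in atTop, ∀ a ∈ box n B, (#(eval a h).natAbs.primeFactors : ℝ) ≤ ε * B := by
  let C := ∑ m ∈ h.support, (h.coeff m).natAbs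
  have hgrowth : ∀ᶠ B : ℕ in atTop, (C * B ^ h.totalDegree : ℝ) ≤ 2 ^ (ε * B) := by
    have hlittleO := (isLittleO_pow_const_const_pow_of_one_lt (R := ℝ) h.totalDegree
      (Real.one_lt_rpow one_lt_two hε)).const_mul_left C
    filter_upwards [hlittleO.bound one_pos] with B hB
    rw [one_mul, ← Real.rpow_mul_natCast zero_le_two] at hB
    exact (le_abs_self _).trans (hB.trans_eq (Real.norm_of_nonneg (by positivity)))
  filter_upwards [hgrowth, eventually_gt_atTop 0] with B hB hB0 a ha
  rcases eq_or_ne (eval a h).natAbs 0 with h0 | h0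
  · rw [h0, Nat.primeFactors_zero, card_empty, Nat.cast_zero]
    positivity
  · rw [← Real.rpow_le_rpow_left_iff one_lt_two, Real.rpow_natCast]
    calc (2 : ℝ) ^ #(eval a h).natAbs.primeFactors
        ≤ C * B ^ h.totalDegree :=
          mod_cast (two_pow_card_primeFactors_le h0).trans (natAbs_eval_le hB0 ha)
      _ ≤ 2 ^ (ε * B) := hB

theorem sum_box_sum_inv_primeFactors_eval_le {h : MvPolynomial (Fin n) ℤ} {M : ℕ}
    (hM : ∀ p ≥ M, map (Int.castRingHom (ZMod p)) h ≠ 0) (B : ℕ) :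
    ∑ b ∈ box n B, ∑ p ∈ (eval b h).natAbs.primeFactors with p ∈ Ioc M B, (p : ℝ)⁻¹ ≤
      h.totalDegree * (3 * B) ^ n * (2 / (M + 1)) := by
  calc ∑ b ∈ box n B, ∑ p ∈ (eval b h).natAbs.primeFactors with p ∈ Ioc M B, (p : ℝ)⁻¹
      ≤ ∑ b ∈ box n B, ∑ p ∈ Ioc M B with Nat.Prime p ∧ (p : ℤ) ∣ eval b h, (p : ℝ)⁻¹ := by
        refine sum_le_sum fun b _ => sum_le_sum_of_subset_of_nonneg ?_ fun _ _ _ => by positivity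
        intro p hp
        rw [mem_filter] at hp ⊢
        exact ⟨hp.2, Nat.prime_of_mem_primeFactors hp.1,
          Int.natCast_dvd.2 (Nat.dvd_of_mem_primeFactors hp.1)⟩
    _ = ∑ p ∈ Ioc M B with Nat.Prime p, boxCount {b | (p : ℤ) ∣ eval b h} B * (p : ℝ)⁻¹ := by
        simp only [boxCount_setOf, ← nsmul_eq_mul, ← sum_const]
        exact sum_comm' fun b p => by simp only [mem_filter]; tauto
    _ ≤ ∑ p ∈ Ioc M B with Nat.Prime p, h.totalDegree * (3 * B) ^ n * ((p : ℝ) ^ 2)⁻¹ := by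
        refine sum_le_sum fun p hp => ?_
        obtain ⟨⟨hMp, hpB⟩, hprime⟩ := (mem_filter.trans (and_congr_left' mem_Ioc)).1 hp
        have hpB' : (p : ℝ) ≤ B := mod_cast hpB
        calc (boxCount {b | (p : ℤ) ∣ eval b h} B : ℝ) * (p : ℝ)⁻¹
            ≤ h.totalDegree * (2 * B + p) ^ n / p * (p : ℝ)⁻¹ := by
              gcongr
              exact boxCount_dvd_eval_le B hprime (hM p hMp.le)
          _ ≤ h.totalDegree * (2 * B + B) ^ n / p * (p : ℝ)⁻¹ := by gcongr
          _ = h.totalDegree * (3 * B) ^ n * ((p : ℝ) ^ 2)⁻¹ := by ring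
    _ ≤ ∑ p ∈ Ioo M (B + 1), h.totalDegree * (3 * B) ^ n * ((p : ℝ) ^ 2)⁻¹ := by
        refine sum_le_sum_of_subset_of_nonneg ?_ fun _ _ _ => by positivity
        exact (filter_subset _ _).trans fun p => by simp only [mem_Ioc, mem_Ioo]; lia
    _ ≤ h.totalDegree * (3 * B) ^ n * (2 / (M + 1)) := by
        rw [← mul_sum]
        gcongr
        exact sum_Ioo_inv_sq_le M (B + 1)

theorem eventually_sum_box_sum_inv_primeFactors_eval_le {h : MvPolynomial (Fin n) ℤ} (hh : h ≠ 0)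
    {ε : ℝ} (hε : 0 < ε) : ∀ᶠ M in atTop, ∀ B : ℕ,
      ∑ b ∈ box n B, ∑ p ∈ (eval b h).natAbs.primeFactors with p ∈ Ioc M B, (p : ℝ)⁻¹ ≤
        ε * (2 * B) ^ n := by
  have hlim : Tendsto (fun M : ℕ => h.totalDegree * 3 ^ n * (2 / ((M : ℝ) + 1))) atTop
      (nhds (h.totalDegree * 3 ^ n * 0)) :=
    (tendsto_const_nhds.div_atTop
      (tendsto_natCast_atTop_atTop.atTop_add tendsto_const_nhds)).const_mul _
  rw [mul_zero] at hlim
  filter_upwards [hlim.eventually_le_const hε,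
    eventually_forall_ge_atTop.2 (eventually_map_castRingHom_ne_zero hh)] with M hM hmap B
  calc ∑ b ∈ box n B, ∑ p ∈ (eval b h).natAbs.primeFactors with p ∈ Ioc M B, (p : ℝ)⁻¹
      ≤ h.totalDegree * (3 * B) ^ n * (2 / (M + 1)) := sum_box_sum_inv_primeFactors_eval_le hmap B
    _ = h.totalDegree * 3 ^ n * (2 / (M + 1)) * B ^ n := by ring
    _ ≤ ε * (2 * B) ^ n := by
        gcongr
        linarith [Nat.cast_nonneg (α := ℝ) B]

end Primes

section Fibers

variable {n : ℕ}

theorem card_filter_exists_dvd_eval_le {a b : ℤ} (hab : a ≤ b) (F : Polynomial ℤ) {P : Finset ℕ}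
    (hP : ∀ p ∈ P, p.Prime) :
    (#{x ∈ Ico a b | ∃ p ∈ P, (p : ℤ) ∣ F.eval x ∧ F.map (Int.castRingHom (ZMod p)) ≠ 0} : ℝ) ≤
      F.natDegree * ∑ p ∈ P, ((b - a) / p + 1 : ℝ) := by
  let P' : Finset ℕ := {p ∈ P | F.map (Int.castRingHom (ZMod p)) ≠ 0}
  have hnonneg : (0 : ℝ) ≤ b - a := by exact_mod_cast sub_nonneg.2 hab
  have hcover : {x ∈ Ico a b | ∃ p ∈ P, (p : ℤ) ∣ F.eval x ∧
      F.map (Int.castRingHom (ZMod p)) ≠ 0} ⊆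
        P'.biUnion fun p => {x ∈ Ico a b | (p : ℤ) ∣ F.eval x} := by
    intro x hx
    obtain ⟨hxab, p, hp, hdvd, hne⟩ := mem_filter.1 hx
    exact mem_biUnion.2 ⟨p, mem_filter.2 ⟨hp, hne⟩, mem_filter.2 ⟨hxab, hdvd⟩⟩
  calc (#{x ∈ Ico a b | ∃ p ∈ P, (p : ℤ) ∣ F.eval x ∧ F.map (Int.castRingHom (ZMod p)) ≠ 0} : ℝ)
      ≤ ∑ p ∈ P', (#{x ∈ Ico a b | (p : ℤ) ∣ F.eval x} : ℝ) :=
        mod_cast (card_le_card hcover).trans card_biUnion_le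
    _ ≤ ∑ p ∈ P', F.natDegree * ((b - a) / p + 1 : ℝ) := by
        refine sum_le_sum fun p hp => ?_
        obtain ⟨hpP, hne⟩ := mem_filter.1 hp
        exact card_filter_dvd_eval_le hab (hP p hpP) hne
    _ ≤ ∑ p ∈ P, F.natDegree * ((b - a) / p + 1 : ℝ) :=
        sum_le_sum_of_subset_of_nonneg (filter_subset _ _) fun _ _ _ => by positivity
    _ = F.natDegree * ∑ p ∈ P, ((b - a) / p + 1 : ℝ) := by rw [mul_sum]

theorem sum_two_mul_div_add_one_le (P : Finset ℕ) (M B : ℕ) :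
    ∑ p ∈ P with M < p, (2 * B / p + 1 : ℝ) ≤
      3 * #P + 2 * B * ∑ p ∈ P with p ∈ Ioc M B, (p : ℝ)⁻¹ := by
  have hterm (p : ℕ) : (2 * B / p + 1 : ℝ) ≤ 3 + if p ≤ B then 2 * B * (p : ℝ)⁻¹ else 0 := by
    split_ifs with hpB
    · rw [← div_eq_mul_inv]
      linarith
    · have : (2 * B / p : ℝ) ≤ 2 :=
        div_le_of_le_mul₀ (by positivity) zero_le_two (by gcongr; exact (not_le.1 hpB).le)
      linarith
  calc ∑ p ∈ P with M < p, (2 * B / p + 1 : ℝ)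
      ≤ ∑ p ∈ P with M < p, (3 + if p ≤ B then 2 * B * (p : ℝ)⁻¹ else 0) :=
        sum_le_sum fun p _ => hterm p
    _ = 3 * #{p ∈ P | M < p} + 2 * B * ∑ p ∈ P with p ∈ Ioc M B, (p : ℝ)⁻¹ := by
        simp only [sum_add_distrib, sum_const, nsmul_eq_mul, ← sum_filter, filter_filter, mem_Ioc,
          ← mul_sum, mul_comm (3 : ℝ)]
    _ ≤ 3 * #P + 2 * B * ∑ p ∈ P with p ∈ Ioc M B, (p : ℝ)⁻¹ := by
        gcongr
        exact filter_subset _ _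

/-- The points `(x, b) ∈ ℤ^(n+1)` for which some prime `p > M` dividing `h(b) ≠ 0` also divides
`f(x, b)`, although the one-variable polynomial `f(·, b)` does not vanish modulo `p`. These are the
points of the sieve set that are counted fiber by fiber. -/
def nondegenerateFiberSet (f : MvPolynomial (Fin (n + 1)) ℤ) (h : MvPolynomial (Fin n) ℤ)
    (M : ℕ) : Set (Fin (n + 1) → ℤ) :=
  {a | ∃ p ∈ (eval (Fin.tail a) h).natAbs.primeFactors, M < p ∧ (p : ℤ) ∣ eval a f ∧
    ((finSuccEquiv ℤ n f).map (eval (Fin.tail a))).map (Int.castRingHom (ZMod p)) ≠ 0}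

open Classical in
theorem card_filter_cons_mem_nondegenerateFiberSet_le (f : MvPolynomial (Fin (n + 1)) ℤ)
    (h : MvPolynomial (Fin n) ℤ) (M B : ℕ) (b : Fin n → ℤ) :
    (#{x ∈ Ico (-(B : ℤ)) B | Fin.cons x b ∈ nondegenerateFiberSet f h M} : ℝ) ≤
      degreeOf 0 f * (3 * #(eval b h).natAbs.primeFactors +
        2 * B * ∑ p ∈ (eval b h).natAbs.primeFactors with p ∈ Ioc M B, (p : ℝ)⁻¹) := by
  let P := (eval b h).natAbs.primeFactors
  let F := (finSuccEquiv ℤ n f).map (eval b)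
  have hdeg : F.natDegree ≤ degreeOf 0 f :=
    Polynomial.natDegree_map_le.trans_eq (natDegree_finSuccEquiv f)
  have hfiber (x : ℤ) : Fin.cons x b ∈ nondegenerateFiberSet f h M ↔
      ∃ p ∈ {p ∈ P | M < p}, (p : ℤ) ∣ F.eval x ∧ F.map (Int.castRingHom (ZMod p)) ≠ 0 := by
    simp only [nondegenerateFiberSet, Set.mem_ofPred_eq, Fin.tail_cons, eval_eq_eval_mv_eval',
      mem_filter, and_assoc, P, F]
  have hcount := card_filter_exists_dvd_eval_le (a := -B) (b := B) (by lia) F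
    (P := {p ∈ P | M < p}) fun p hp => Nat.prime_of_mem_primeFactors (mem_filter.1 hp).1
  simp only [Int.cast_neg, sub_neg_eq_add, ← two_mul, Int.cast_natCast] at hcount
  simp only [hfiber]
  refine hcount.trans ?_
  gcongr
  exact sum_two_mul_div_add_one_le P M B

theorem hasVanishingDensity_nondegenerateFiberSet (f : MvPolynomial (Fin (n + 1)) ℤ)
    {h : MvPolynomial (Fin n) ℤ} (hh : h ≠ 0) :
    HasVanishingDensity (nondegenerateFiberSet f h) := by
  classical
  intro ε hε
  let k : ℝ := degreeOf 0 f
  let δ : ℝ := ε / (3 * (k + 1))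
  have hδ : 0 < δ := by positivity
  filter_upwards [eventually_sum_box_sum_inv_primeFactors_eval_le hh hδ] with M hM
  filter_upwards [eventually_card_primeFactors_eval_le h hδ] with B hB
  have hcard : ∑ b ∈ box n B, (#(eval b h).natAbs.primeFactors : ℝ) ≤ (2 * B) ^ n * (δ * B) := by
    refine (sum_le_card_nsmul _ _ _ hB).trans_eq ?_
    rw [card_box, nsmul_eq_mul, Nat.cast_pow, Nat.cast_mul, Nat.cast_ofNat]
  calc (boxCount (nondegenerateFiberSet f h M) B : ℝ)
      ≤ ∑ b ∈ box n B, k * (3 * #(eval b h).natAbs.primeFactors +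
          2 * B * ∑ p ∈ (eval b h).natAbs.primeFactors with p ∈ Ioc M B, (p : ℝ)⁻¹) := by
        rw [boxCount_succ, Nat.cast_sum]
        exact sum_le_sum fun b _ => card_filter_cons_mem_nondegenerateFiberSet_le f h M B b
    _ = k * (3 * ∑ b ∈ box n B, (#(eval b h).natAbs.primeFactors : ℝ) + 2 * B * ∑ b ∈ box n B,
          ∑ p ∈ (eval b h).natAbs.primeFactors with p ∈ Ioc M B, (p : ℝ)⁻¹) := by
        simp only [← mul_sum, sum_add_distrib]
    _ ≤ k * (3 * ((2 * B) ^ n * (δ * B)) + 2 * B * (δ * (2 * B) ^ n)) := by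
        gcongr
        exact hM B
    _ = 5 / 2 * k * δ * (2 * B) ^ (n + 1) := by ring
    _ ≤ 3 * (k + 1) * δ * (2 * B) ^ (n + 1) := by
        gcongr
        · norm_num
        · exact le_add_of_nonneg_right zero_le_one
    _ = ε * (2 * B) ^ (n + 1) := by rw [mul_div_cancel₀ ε (by positivity)]

end Fibers

section Sieve

variable {n : ℕ}

/-- The set `S_M(f, g)` of points at which `f` and `g` are both divisible by a common prime
`p > M`. -/
def commonPrimeSet (f g : MvPolynomial (Fin n) ℤ) (M : ℕ) : Set (Fin n → ℤ) :=
  {a | ∃ p : ℕ, p.Prime ∧ M < p ∧ (p : ℤ) ∣ eval a f ∧ (p : ℤ) ∣ eval a g}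

theorem commonPrimeSet_comm (f g : MvPolynomial (Fin n) ℤ) (M : ℕ) :
    commonPrimeSet f g M = commonPrimeSet g f M := by
  simp only [commonPrimeSet, and_comm]

theorem commonPrimeSet_mul_subset (f g₁ g₂ : MvPolynomial (Fin n) ℤ) (M : ℕ) :
    commonPrimeSet f (g₁ * g₂) M ⊆ commonPrimeSet f g₁ M ∪ commonPrimeSet f g₂ M := by
  rintro a ⟨p, hp, hMp, hf, hg⟩
  rw [map_mul, (Nat.prime_iff_prime_int.1 hp).dvd_mul] at hg
  exact hg.imp (⟨p, hp, hMp, hf, ·⟩) (⟨p, hp, hMp, hf, ·⟩)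

theorem commonPrimeSet_subset_of_mul_add_mul_eq {f g h u v : MvPolynomial (Fin n) ℤ}
    (huv : u * f + v * g = h) (M : ℕ) : commonPrimeSet f g M ⊆ commonPrimeSet g h M := by
  rintro a ⟨p, hp, hMp, hf, hg⟩
  refine ⟨p, hp, hMp, hg, ?_⟩
  rw [← huv, map_add, map_mul, map_mul]
  exact dvd_add (hf.mul_left _) (hg.mul_left _)

theorem hasVanishingDensity_commonPrimeSet_C (f : MvPolynomial (Fin n) ℤ) {c : ℤ} (hc : c ≠ 0) :
    HasVanishingDensity (commonPrimeSet f (C c)) := by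
  refine .of_eventually_eq_empty ?_
  filter_upwards [eventually_forall_ge_atTop.2 (eventually_not_natCast_dvd hc)] with M hM
  refine Set.eq_empty_of_forall_notMem ?_
  rintro a ⟨p, -, hMp, -, hdvd⟩
  exact hM p hMp.le (by rwa [eval_C] at hdvd)

theorem hasVanishingDensity_commonPrimeSet_of_totalDegree_eq_zero (f : MvPolynomial (Fin n) ℤ)
    {g : MvPolynomial (Fin n) ℤ} (hg : g ≠ 0) (hdeg : g.totalDegree = 0) :
    HasVanishingDensity (commonPrimeSet f g) := by
  rw [totalDegree_eq_zero_iff_eq_C] at hdeg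
  rw [hdeg, Ne, C_eq_zero] at hg
  rw [hdeg]
  exact hasVanishingDensity_commonPrimeSet_C f hg

theorem hasVanishingDensity_commonPrimeSet_of_forall_irreducible_dvd
    {f g : MvPolynomial (Fin n) ℤ} (hg : g ≠ 0)
    (hfactor : ∀ q, Irreducible q → q ∣ g → HasVanishingDensity (commonPrimeSet f q)) :
    HasVanishingDensity (commonPrimeSet f g) := by
  induction g using WfDvdMonoid.induction_on_irreducible with
  | zero => exact absurd rfl hg
  | unit u hu =>
    exact hasVanishingDensity_commonPrimeSet_of_totalDegree_eq_zero f hg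
      (isUnit_iff_totalDegree_of_isReduced.1 hu).2
  | mul g q hg' hq ih =>
    have hvanish_g := ih hg' fun q' hq' hdvd => hfactor q' hq' (hdvd.mul_left q)
    exact ((hfactor q hq (dvd_mul_right q g)).union hvanish_g).mono
      (.of_forall (commonPrimeSet_mul_subset f q g))

theorem hasVanishingDensity_zeroLocus {h : MvPolynomial (Fin n) ℤ} (hh : h ≠ 0) :
    HasVanishingDensity fun _ => {a | eval a h = 0} := by
  intro ε hε
  refine .of_forall fun _ => ?_
  filter_upwards [eventually_ge_atTop ⌈h.totalDegree / ε⌉₊, eventually_gt_atTop 0] with B hB hB0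
  have hdeg : (h.totalDegree : ℝ) ≤ ε * (2 * B) := by
    have := (div_le_iff₀' hε).1 (Nat.ceil_le.1 hB)
    nlinarith
  have hB0' : (0 : ℝ) < 2 * B := by positivity
  refine le_of_mul_le_mul_right ?_ hB0'
  calc (boxCount {a | eval a h = 0} B : ℝ) * (2 * B)
      ≤ h.totalDegree * (2 * B) ^ n := mod_cast boxCount_zeroLocus_mul_le hh B
    _ ≤ ε * (2 * B) * (2 * B) ^ n := by gcongr
    _ = ε * (2 * B) ^ n * (2 * B) := by ring

theorem commonPrimeSet_rename_succ_subset (f : MvPolynomial (Fin (n + 1)) ℤ)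
    (h : MvPolynomial (Fin n) ℤ) (i M : ℕ) :
    commonPrimeSet f (rename Fin.succ h) M ⊆
      Fin.tail ⁻¹' commonPrimeSet ((finSuccEquiv ℤ n f).coeff i) h M ∪
        (Fin.tail ⁻¹' {b | eval b h = 0} ∪ nondegenerateFiberSet f h M) := by
  rintro a ⟨p, hp, hMp, hf, hh⟩
  rw [eval_rename] at hh
  change (p : ℤ) ∣ eval (Fin.tail a) h at hh
  by_cases hzero : eval (Fin.tail a) h = 0
  · exact .inr (.inl hzero)
  by_cases hfiber :
      ((finSuccEquiv ℤ n f).map (eval (Fin.tail a))).map (Int.castRingHom (ZMod p)) = 0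
  · refine .inl ⟨p, hp, hMp, ?_, hh⟩
    have hcoeff := congrArg (Polynomial.coeff · i) hfiber
    rwa [Polynomial.coeff_map, Polynomial.coeff_map, Polynomial.coeff_zero, eq_intCast,
      ZMod.intCast_zmod_eq_zero_iff_dvd] at hcoeff
  · have hmem : p ∈ (eval (Fin.tail a) h).natAbs.primeFactors :=
      Nat.mem_primeFactors.2 ⟨hp, Int.natCast_dvd.1 hh, Int.natAbs_ne_zero.2 hzero⟩
    exact .inr (.inr ⟨p, hmem, hMp, hf, hfiber⟩)

theorem hasVanishingDensity_commonPrimeSet_rename_succ {f : MvPolynomial (Fin (n + 1)) ℤ}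
    {h : MvPolynomial (Fin n) ℤ} (hh : h ≠ 0) {i : ℕ}
    (hcoeff : HasVanishingDensity (commonPrimeSet ((finSuccEquiv ℤ n f).coeff i) h)) :
    HasVanishingDensity (commonPrimeSet f (rename Fin.succ h)) :=
  (hcoeff.preimage_tail.union ((hasVanishingDensity_zeroLocus hh).preimage_tail.union
    (hasVanishingDensity_nondegenerateFiberSet f hh))).mono
      (.of_forall (commonPrimeSet_rename_succ_subset f h i))

theorem hasVanishingDensity_commonPrimeSet_of_degreeOf_zero_eq_zero
    (ih : ∀ {f h : MvPolynomial (Fin n) ℤ}, Irreducible h → ¬ h ∣ f →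
      HasVanishingDensity (commonPrimeSet f h))
    {f h : MvPolynomial (Fin (n + 1)) ℤ} (hh : Irreducible h) (hdeg : degreeOf 0 h = 0)
    (hf : ¬ h ∣ f) : HasVanishingDensity (commonPrimeSet f h) := by
  obtain ⟨r, rfl⟩ := exists_rename_succ_eq_of_degreeOf_zero_eq_zero hdeg
  have hr := irreducible_of_irreducible_rename_succ hh
  obtain ⟨i, hi⟩ := not_forall.1 (mt rename_succ_dvd_iff_dvd_coeff.2 hf)
  exact hasVanishingDensity_commonPrimeSet_rename_succ hr.ne_zero (ih hr hi)

theorem hasVanishingDensity_commonPrimeSet_of_degreeOf_zero_ne_zero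
    (ih : ∀ {f h : MvPolynomial (Fin n) ℤ}, Irreducible h → ¬ h ∣ f →
      HasVanishingDensity (commonPrimeSet f h))
    {f h : MvPolynomial (Fin (n + 1)) ℤ} (hh : Irreducible h) (hdeg : degreeOf 0 h ≠ 0)
    (hf : ¬ h ∣ f) : HasVanishingDensity (commonPrimeSet f h) := by
  obtain ⟨u, v, r, hr, huv⟩ := exists_mul_add_mul_eq_rename_succ hh hdeg hf
  have hr' : rename Fin.succ r ≠ 0 :=
    (map_ne_zero_iff _ (rename_injective _ (Fin.succ_injective n))).2 hr
  suffices HasVanishingDensity (commonPrimeSet h (rename Fin.succ r)) from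
    this.mono (.of_forall (commonPrimeSet_subset_of_mul_add_mul_eq huv))
  refine hasVanishingDensity_commonPrimeSet_of_forall_irreducible_dvd hr' fun q hq hqr => ?_
  have hq0 : degreeOf 0 q = 0 := by
    have := degreeOf_le_degreeOf_of_dvd 0 hr' hqr
    rwa [← natDegree_finSuccEquiv (rename Fin.succ r), finSuccEquiv_rename_succ,
      Polynomial.natDegree_C, Nat.le_zero] at this
  refine hasVanishingDensity_commonPrimeSet_of_degreeOf_zero_eq_zero ih hq hq0 fun hqh => hdeg ?_
  have hhq : h ∣ q := (hq.dvd_irreducible_iff_associated hh).1 hqh |>.symm.dvd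
  exact Nat.le_zero.1 ((degreeOf_le_degreeOf_of_dvd 0 hq.ne_zero hhq).trans_eq hq0)

theorem hasVanishingDensity_commonPrimeSet_of_irreducible {f h : MvPolynomial (Fin n) ℤ}
    (hh : Irreducible h) (hf : ¬ h ∣ f) : HasVanishingDensity (commonPrimeSet f h) := by
  induction n with
  | zero =>
    refine hasVanishingDensity_commonPrimeSet_of_totalDegree_eq_zero f hh.ne_zero ?_
    rw [eq_C_of_isEmpty h, totalDegree_C]
  | succ n ih =>
    by_cases hdeg : degreeOf 0 h = 0
    · exact hasVanishingDensity_commonPrimeSet_of_degreeOf_zero_eq_zero ih hh hdeg hf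
    · exact hasVanishingDensity_commonPrimeSet_of_degreeOf_zero_ne_zero ih hh hdeg hf

theorem hasVanishingDensity_commonPrimeSet {f g : MvPolynomial (Fin n) ℤ} (hg : g ≠ 0)
    (hfg : ∀ h, h ∣ f → h ∣ g → h.totalDegree = 0) :
    HasVanishingDensity (commonPrimeSet f g) := by
  refine hasVanishingDensity_commonPrimeSet_of_forall_irreducible_dvd hg fun q hq hqg => ?_
  by_cases hqf : q ∣ f
  · exact hasVanishingDensity_commonPrimeSet_of_totalDegree_eq_zero f hq.ne_zero (hfg q hqf hqg)
  · exact hasVanishingDensity_commonPrimeSet_of_irreducible hq hqf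

end Sieve

end EkedahlSieve

/-- if `f, g ∈ ℤ[x_1,…,x_d]` have no common nonconstant factor, then the upper
density of `S_M(f,g) = {a ∈ ℤ^d : p ∣ f(a), p ∣ g(a) for some prime p > M}` tends to `0`
as `M → ∞`. -/
theorem ekedahl_sieve (d : ℕ) (hd : 0 < d) (f g : MvPolynomial (Fin d) ℤ)
    (hfg : ∀ h : MvPolynomial (Fin d) ℤ, h ∣ f → h ∣ g → h.totalDegree = 0) :
    Tendsto
      (fun M : ℕ =>
        upperDensity {a : Fin d → ℤ |
          ∃ p : ℕ, p.Prime ∧ M < p ∧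
            (p : ℤ) ∣ MvPolynomial.eval a f ∧ (p : ℤ) ∣ MvPolynomial.eval a g})
      atTop (nhds 0) := by
  suffices EkedahlSieve.HasVanishingDensity (EkedahlSieve.commonPrimeSet f g) from
    this.tendsto_upperDensity
  by_cases hg : g = 0
  · have hf : f ≠ 0 := by
      rintro rfl
      have hX := hfg (MvPolynomial.X ⟨0, hd⟩) (dvd_zero _) (hg ▸ dvd_zero _)
      rw [MvPolynomial.totalDegree_X] at hX
      exact one_ne_zero hX
    rw [funext (EkedahlSieve.commonPrimeSet_comm f g)]
    exact EkedahlSieve.hasVanishingDensity_commonPrimeSet hf fun h hhg hhf => hfg h hhf hhg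
  · exact EkedahlSieve.hasVanishingDensity_commonPrimeSet hg hfg
end

section
/- (Poonen–Stoll local-global principle, convergence.) Let d be a positive integer. Let U_∞ ⊆ ℝ^d satisfy ℝ_{≥0}·U_∞ = U_∞ and μ_∞(∂U_∞) = 0, and set s_∞ = μ_∞(U_∞ ∩ [−1,1]^d)/2^d, where μ_∞ is Lebesgue measure. For each prime p let U_p ⊆ ℤ_p^d satisfy μ_p(∂U_p) = 0, and set s_p = μ_p(U_p), where μ_p is the normalized Haar measure on ℤ_p^d. If lim_{M→∞} ρ̄({ a ∈ ℤ^d : a ∈ U_p for some prime p > M }) = 0, where ℤ^d embeds in ℤ_p^d canonically, then the series Σ_{ν ∈ M_ℚ} s_ν = s_∞ + Σ_{p prime} s_p converges. -/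
set_option synthInstance.maxHeartbeats 1000000
set_option maxHeartbeats 1000000

open Filter MeasureTheory

instance factPrimes (p : Nat.Primes) : Fact (Nat.Prime (p : ℕ)) := ⟨p.2⟩

noncomputable instance padicMeasurableSpace (p : ℕ) [Fact p.Prime] :
    MeasurableSpace ℤ_[p] := borel _

instance padicBorelSpace (p : ℕ) [Fact p.Prime] : BorelSpace ℤ_[p] := ⟨rfl⟩

/-- The local masses `s_ν` of the Poonen–Stoll local-global principle: `s_∞` is the Lebesgue
measure of `U_∞ ∩ [−1,1]^d` divided by `2^d`, and `s_p = μ_p(U_p)`; the place `∞` is encoded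
as `none : Option Nat.Primes` and a prime `p` as `some p`. -/
noncomputable def placeMass (d : ℕ) (Uinf : Set (Fin d → ℝ))
    (Up : (p : Nat.Primes) → Set (Fin d → ℤ_[(p : ℕ)]))
    (μ : (p : Nat.Primes) → Measure (Fin d → ℤ_[(p : ℕ)])) :
    Option Nat.Primes → ℝ
  | none =>
      (volume (Uinf ∩ Set.pi Set.univ fun _ => Set.Icc (-1 : ℝ) 1)).toReal / 2 ^ d
  | some p => ((μ p) (Up p)).toReal

/-!
For a finite set `F` of primes `p > M`, the Chinese remainder theorem makes the conditions
`a ∈ U_p` modulo high powers of the `p ∈ F` independent, so the integer points lying in some `U_p`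
have density at least `1 - ∏ p ∈ F, (1 - s_p)`; here each `U_p` is exhausted, up to its null
boundary, by unions of residue classes. If the upper density of the points lying in some `U_p` with
`p > M` is `c < 1`, then `1 - c ≤ ∏ p ∈ F, (1 - s_p) ≤ exp (-∑ p ∈ F, s_p)`, which bounds the
partial sums of `∑ s_p` over `p > M` by `-log (1 - c)`.
-/

section Summability

theorem summable_of_one_sub_prod_one_sub_le {ι : Type*} {x : ι → ℝ} {c : ℝ} (hx₀ : ∀ i, 0 ≤ x i)
    (hx₁ : ∀ i, x i ≤ 1) (hc : c < 1) (h : ∀ F : Finset ι, 1 - ∏ i ∈ F, (1 - x i) ≤ c) :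
    Summable x := by
  refine summable_of_sum_le (c := -Real.log (1 - c)) hx₀ fun F => ?_
  have hexp : 1 - c ≤ Real.exp (-∑ i ∈ F, x i) :=
    calc 1 - c ≤ ∏ i ∈ F, (1 - x i) := by linarith [h F]
      _ ≤ ∏ i ∈ F, Real.exp (-x i) :=
        Finset.prod_le_prod (fun i _ => sub_nonneg.2 (hx₁ i))
          fun i _ => Real.one_sub_le_exp_neg (x i)
      _ = Real.exp (-∑ i ∈ F, x i) := by rw [← Real.exp_sum, Finset.sum_neg_distrib]
  linarith [(Real.log_le_iff_le_exp (sub_pos.2 hc)).2 hexp]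

theorem summable_of_summable_comp_of_finite_compl_range {α β G : Type*} [AddCommGroup G]
    [TopologicalSpace G] [IsTopologicalAddGroup G] {f : β → G} {g : α → β}
    (hg : Function.Injective g) (hfin : (Set.range g)ᶜ.Finite) (h : Summable (f ∘ g)) :
    Summable f := by
  have hrange : Summable (f ∘ ((↑) : Set.range g → β)) := 
    (Equiv.ofInjective g hg).summable_iff.1 h
  rw [← compl_compl (Set.range g)] at hrange
  exact hfin.summable_compl_iff.1 hrange

end Summability

/-- The proportion of the elements of a finite type that lie in `A`. -/
noncomputable def proportion {α : Type*} (A : Set α) : ℝ :=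
  A.ncard / Nat.card α

section Proportion

theorem proportion_compl {α : Type*} [Finite α] [Nonempty α] (A : Set α) :
    proportion Aᶜ = 1 - proportion A := by
  have hcard : (A.ncard : ℝ) + Aᶜ.ncard = Nat.card α := mod_cast A.ncard_add_ncard_compl
  have hpos : (Nat.card α : ℝ) ≠ 0 := Nat.cast_ne_zero.2 Nat.card_pos.ne'
  rw [proportion, proportion, eq_sub_iff_add_eq, ← add_div, add_comm, hcard, div_self hpos]

theorem proportion_preimage_equiv {α β : Type*} (e : α ≃ β) (A : Set β) :
    proportion (e ⁻¹' A) = proportion A := by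
  rw [proportion, proportion, Set.ncard_preimage_of_injective_subset_range e.injective (by simp),
    Nat.card_congr e]

theorem proportion_univ_pi {κ : Type*} [Fintype κ] {α : κ → Type*} (A : ∀ k, Set (α k)) :
    proportion (Set.univ.pi A) = ∏ k, proportion (A k) := by
  have hcard : (Set.univ.pi A).ncard = ∏ k, (A k).ncard := by
    simp_rw [← Nat.card_coe_set_eq, ← Nat.card_pi]
    exact Nat.card_congr (Equiv.Set.univPi A)
  simp only [proportion, hcard, Nat.card_pi, Nat.cast_prod, Finset.prod_div_distrib]

theorem measureReal_preimage_eq_proportion {G H : Type*} [AddGroup G] [MeasurableSpace G]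
    [MeasurableAdd G] [AddGroup H] [Finite H] (μ : Measure G) [μ.IsAddLeftInvariant]
    [IsProbabilityMeasure μ] (f : G →+ H) (hf : Function.Surjective f)
    (hmeas : ∀ h, MeasurableSet (f ⁻¹' {h})) (A : Set H) :
    μ.real (f ⁻¹' A) = proportion A := by
  classical
  have := Fintype.ofFinite H
  have hfiber : ∀ h, μ.real (f ⁻¹' {h}) = μ.real (f ⁻¹' {0}) := by
    intro h
    obtain ⟨g, rfl⟩ := hf h
    rw [measureReal_def, measureReal_def, ← measure_preimage_add μ g (f ⁻¹' {f g})]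
    congr 2
    ext x
    simp
  have hsum : ∀ B : Set H, μ.real (f ⁻¹' B) = B.ncard * μ.real (f ⁻¹' {0}) := by
    intro B
    rw [← B.coe_toFinset, ← sum_measureReal_preimage_singleton _ fun h _ => hmeas h,
      Set.ncard_coe_finset]
    simp only [hfiber, Finset.sum_const, nsmul_eq_mul]
  have htotal : 1 = Nat.card H * μ.real (f ⁻¹' {0}) := by
    simpa [Set.ncard_univ] using hsum Set.univ
  rw [hsum A, proportion, eq_div_of_mul_eq (Nat.cast_ne_zero.2 Nat.card_pos.ne')
    ((mul_comm _ _).trans htotal.symm), mul_one_div]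

end Proportion

/-- The integer points of the cube `[-B, B)^d`. -/
noncomputable def box (d B : ℕ) : Finset (Fin d → ℤ) :=
  Fintype.piFinset fun _ => Finset.Ico (-(B : ℤ)) B

/-- The proportion of the points of `box d B` that lie in `S`, with limit superior
`upperDensity S` as `B → ∞`. -/
noncomputable def boxDensity {d : ℕ} (S : Set (Fin d → ℤ)) (B : ℕ) : ℝ :=
  (S ∩ box d B).ncard / (2 * (B : ℝ)) ^ d

section Density

open scoped Finset

variable {d : ℕ}

theorem upperDensity_eq_limsup_boxDensity (S : Set (Fin d → ℤ)) :
    upperDensity S = limsup (boxDensity S) atTop := by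
  refine congrArg (limsup · atTop) (funext fun B => ?_)
  have hbox : S ∩ box d B = {a | a ∈ S ∧ ∀ i, -(B : ℤ) ≤ a i ∧ a i < B} := by
    simp [box, Set.inter_def]
  rw [boxDensity, hbox, ← Nat.card_coe_set_eq]
  rfl

theorem card_box (d B : ℕ) : #(box d B) = (2 * B) ^ d := by
  rw [box, Fintype.card_piFinset_const, Int.card_Ico, show ((B : ℤ) - -B).toNat = 2 * B by lia]

theorem boxDensity_mono {S T : Set (Fin d → ℤ)} (h : S ⊆ T) (B : ℕ) :
    boxDensity S B ≤ boxDensity T B := by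
  unfold boxDensity
  gcongr
  exact (Finset.finite_toSet _).inter_of_right _

theorem boxDensity_nonneg (S : Set (Fin d → ℤ)) (B : ℕ) : 0 ≤ boxDensity S B := by
  unfold boxDensity
  positivity

theorem boxDensity_le_one (S : Set (Fin d → ℤ)) (B : ℕ) : boxDensity S B ≤ 1 := by
  refine (boxDensity_mono S.subset_univ B).trans (div_le_one_of_le₀ ?_ (by positivity))
  rw [Set.univ_inter, Set.ncard_coe_finset, card_box]
  push_cast
  rfl

theorem isBoundedUnder_boxDensity (S : Set (Fin d → ℤ)) :
    IsBoundedUnder (· ≤ ·) atTop (boxDensity S) :=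
  isBoundedUnder_of ⟨1, boxDensity_le_one S⟩

theorem upperDensity_mono {S T : Set (Fin d → ℤ)} (h : S ⊆ T) :
    upperDensity S ≤ upperDensity T := by
  simp only [upperDensity_eq_limsup_boxDensity]
  exact limsup_le_limsup (.of_forall (boxDensity_mono h))
    (isBoundedUnder_of ⟨0, boxDensity_nonneg S⟩).isCoboundedUnder_le (isBoundedUnder_boxDensity T)

theorem card_Ico_filter_intCast_eq (Q : ℕ) [NeZero Q] (b : ℤ) (k : ℕ) (t : ZMod Q) :
    #{x ∈ Finset.Ico b (b + k * Q) | ((x : ℤ) : ZMod Q) = t} = k := by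
  have hQ : (0 : ℤ) < Q := mod_cast NeZero.pos Q
  have hmod : ∀ x : ℤ, (x : ZMod Q) = t ↔ x ≡ t.val [ZMOD Q] := by
    intro x
    rw [← ZMod.intCast_eq_intCast_iff, Int.cast_natCast, ZMod.natCast_zmod_val]
  have hshift : ((b + k * Q : ℤ) - (t.val : ℤ) : ℚ) / (Q : ℤ) =
      (b - (t.val : ℤ)) / (Q : ℤ) + k := by
    have : (Q : ℚ) ≠ 0 := NeZero.ne _
    push_cast
    field_simp
    ring
  zify
  simp_rw [hmod]
  rw [Int.Ico_filter_modEq_card _ _ hQ, hshift, Int.ceil_add_natCast]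
  lia

theorem card_box_filter_zmod_eq (Q k : ℕ) [NeZero Q] (t : Fin d → ZMod Q) :
    #{a ∈ box d (k * Q) | (fun j => (a j : ZMod Q)) = t} = (2 * k) ^ d := by
  have hcoord : ∀ j, #{x ∈ Finset.Ico (-((k * Q : ℕ) : ℤ)) (k * Q : ℕ) | ((x : ℤ) : ZMod Q) = t j} =
      2 * k := by
    intro j
    convert card_Ico_filter_intCast_eq Q (-((k * Q : ℕ) : ℤ)) (2 * k) (t j) using 4
    push_cast
    ring
  have hbox : (box d (k * Q)).filter (fun a => (fun j => (a j : ZMod Q)) = t) =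
      Fintype.piFinset fun j =>
        (Finset.Ico (-((k * Q : ℕ) : ℤ)) (k * Q : ℕ)).filter fun x : ℤ => (x : ZMod Q) = t j := by
    ext a
    simp [box, funext_iff, forall_and]
  rw [hbox, Fintype.card_piFinset]
  simp only [hcoord, Finset.prod_const, Finset.card_univ, Fintype.card_fin]

theorem ncard_preimage_zmod_inter_box (Q k : ℕ) [NeZero Q] (T : Set (Fin d → ZMod Q)) :
    ({a : Fin d → ℤ | (fun j => (a j : ZMod Q)) ∈ T} ∩ box d (k * Q)).ncard =
      T.ncard * (2 * k) ^ d := by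
  classical
  have hfilter : {a : Fin d → ℤ | (fun j => (a j : ZMod Q)) ∈ T} ∩ box d (k * Q) =
      ↑((box d (k * Q)).filter fun a => (fun j => (a j : ZMod Q)) ∈ T.toFinset) := by
    ext a
    simp [and_comm]
  rw [hfilter, Set.ncard_coe_finset, ← Finset.sum_card_fiberwise_eq_card_filter]
  simp only [card_box_filter_zmod_eq, Finset.sum_const, smul_eq_mul, Set.ncard_eq_toFinset_card']

theorem boxDensity_preimage_zmod (Q k : ℕ) [NeZero Q] (hk : k ≠ 0) (T : Set (Fin d → ZMod Q)) :
    boxDensity {a : Fin d → ℤ | (fun j => (a j : ZMod Q)) ∈ T} (k * Q) = proportion T := by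
  have hQ : (Q : ℝ) ≠ 0 := NeZero.ne _
  rw [boxDensity, ncard_preimage_zmod_inter_box, proportion, Nat.card_fun, Nat.card_zmod,
    Nat.card_fin]
  push_cast
  rw [← mul_assoc, mul_pow _ (Q : ℝ)]
  field_simp

theorem proportion_le_upperDensity (Q : ℕ) [NeZero Q] (T : Set (Fin d → ZMod Q)) :
    proportion T ≤ upperDensity {a : Fin d → ℤ | (fun j => (a j : ZMod Q)) ∈ T} := by
  rw [upperDensity_eq_limsup_boxDensity]
  refine le_limsup_of_frequently_le (frequently_atTop.2 fun N => ?_) (isBoundedUnder_boxDensity _)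
  exact ⟨(N + 1) * Q, by nlinarith [NeZero.pos Q],
    (boxDensity_preimage_zmod Q (N + 1) N.succ_ne_zero T).ge⟩

theorem one_sub_prod_one_sub_proportion_le_upperDensity {κ : Type*} [Fintype κ] (n : κ → ℕ)
    [∀ k, NeZero (n k)] (hcop : Pairwise (Function.onFun Nat.Coprime n))
    (A : ∀ k, Set (Fin d → ZMod (n k))) :
    1 - ∏ k, (1 - proportion (A k)) ≤
      upperDensity {a : Fin d → ℤ | ∃ k, (fun j => (a j : ZMod (n k))) ∈ A k} := by
  have : NeZero (∏ k, n k) := ⟨Finset.prod_ne_zero_iff.2 fun k _ => NeZero.ne (n k)⟩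
  let crt : (Fin d → ZMod (∏ k, n k)) ≃ (∀ k, Fin d → ZMod (n k)) :=
    (Equiv.piCongrRight fun _ => (ZMod.prodEquivPi n hcop).toEquiv).trans (Equiv.piComm _)
  have crt_intCast (a : Fin d → ℤ) :
      crt (fun j => (a j : ZMod (∏ k, n k))) = fun k j => (a j : ZMod (n k)) := by
    funext k j
    exact congrFun (map_intCast (ZMod.prodEquivPi n hcop) (a j)) k
  calc 1 - ∏ k, (1 - proportion (A k))
      = proportion (crt ⁻¹' Set.univ.pi fun k => (A k)ᶜ)ᶜ := by
        simp only [proportion_compl, proportion_preimage_equiv, proportion_univ_pi]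
    _ ≤ _ := proportion_le_upperDensity _ _
    _ ≤ _ := upperDensity_mono fun a ha => by
        simpa [crt_intCast] using ha

end Density

/-- Coordinatewise reduction `ℤ_p^ι → (ℤ/p^e)^ι`. The residue classes modulo `p^e` contained in a
set `U ⊆ ℤ_p^ι` are collected in `Set.kernImage (reduceModPow p ι e) U`. -/
noncomputable def reduceModPow (p : ℕ) [Fact p.Prime] (ι : Type*) (e : ℕ) :
    (ι → ℤ_[p]) →+* (ι → ZMod (p ^ e)) :=
  (PadicInt.toZModPow e).compLeft ι

section Padic

variable {p : ℕ} [Fact p.Prime] {ι : Type*}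

theorem reduceModPow_intCast (e : ℕ) (a : ι → ℤ) :
    reduceModPow p ι e (fun i => (a i : ℤ_[p])) = fun i => (a i : ZMod (p ^ e)) :=
  funext fun i => map_intCast (PadicInt.toZModPow e) (a i)

theorem reduceModPow_surjective (e : ℕ) : Function.Surjective (reduceModPow p ι e) :=
  (ZMod.ringHom_surjective (PadicInt.toZModPow e)).comp_left

theorem monotone_preimage_kernImage_reduceModPow (U : Set (ι → ℤ_[p])) :
    Monotone fun e => reduceModPow p ι e ⁻¹' Set.kernImage (reduceModPow p ι e) U := by
  intro m n hmn x hx y hy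
  refine hx (funext fun i => ?_)
  have hyi : PadicInt.toZModPow n (y i) = PadicInt.toZModPow n (x i) := congrFun hy i
  change PadicInt.toZModPow m (y i) = PadicInt.toZModPow m (x i)
  rw [← PadicInt.cast_toZModPow m n hmn (y i), hyi, PadicInt.cast_toZModPow m n hmn]

theorem reduceModPow_eq_iff_dist_le [Fintype ι] (e : ℕ) (x y : ι → ℤ_[p]) :
    reduceModPow p ι e x = reduceModPow p ι e y ↔ dist x y ≤ (p : ℝ) ^ (-e : ℤ) := by
  rw [dist_pi_le_iff (by positivity), funext_iff]
  refine forall_congr' fun i => ?_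
  rw [dist_eq_norm, PadicInt.norm_le_pow_iff_mem_span_pow, ← PadicInt.ker_toZModPow,
    RingHom.mem_ker, map_sub, sub_eq_zero]
  rfl

variable [Finite ι]

theorem isOpen_preimage_reduceModPow (e : ℕ) (A : Set (ι → ZMod (p ^ e))) :
    IsOpen (reduceModPow p ι e ⁻¹' A) := by
  have := Fintype.ofFinite ι
  have hp : (0 : ℝ) < p := mod_cast (Fact.out : p.Prime).pos
  refine Metric.isOpen_iff.2 fun x hx => ⟨(p : ℝ) ^ (-e : ℤ), by positivity, fun y hy => ?_⟩
  rwa [Set.mem_preimage, (reduceModPow_eq_iff_dist_le e y x).2 (Metric.mem_ball.1 hy).le]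

theorem measureReal_preimage_reduceModPow (μ : Measure (ι → ℤ_[p])) [μ.IsAddLeftInvariant]
    [IsProbabilityMeasure μ] (e : ℕ) (A : Set (ι → ZMod (p ^ e))) :
    μ.real (reduceModPow p ι e ⁻¹' A) = proportion A :=
  have : NeZero (p ^ e) := ⟨pow_ne_zero _ (Fact.out : p.Prime).ne_zero⟩
  measureReal_preimage_eq_proportion μ (reduceModPow p ι e).toAddMonoidHom
    (reduceModPow_surjective e) (fun _ => (isOpen_preimage_reduceModPow e _).measurableSet) A

theorem iUnion_preimage_kernImage_reduceModPow (U : Set (ι → ℤ_[p])) :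
    ⋃ e, reduceModPow p ι e ⁻¹' Set.kernImage (reduceModPow p ι e) U = interior U := by
  refine Set.Subset.antisymm (Set.iUnion_subset fun e => ?_) fun x hx => ?_
  · exact interior_maximal (fun x hx => hx rfl) (isOpen_preimage_reduceModPow e _)
  · have := Fintype.ofFinite ι
    have hp : (1 : ℝ) < p := mod_cast (Fact.out : p.Prime).one_lt
    obtain ⟨ε, hε, hball⟩ := Metric.isOpen_iff.1 isOpen_interior x hx
    obtain ⟨e, he⟩ := exists_pow_lt_of_lt_one hε (inv_lt_one_of_one_lt₀ hp)
    rw [inv_pow, ← zpow_natCast, ← zpow_neg] at he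
    refine Set.mem_iUnion.2 ⟨e, fun y hy => interior_subset (hball ?_)⟩
    exact ((reduceModPow_eq_iff_dist_le e y x).1 hy).trans_lt he

theorem tendsto_proportion_kernImage_reduceModPow (μ : Measure (ι → ℤ_[p]))
    [μ.IsAddLeftInvariant] [IsProbabilityMeasure μ] (U : Set (ι → ℤ_[p])) :
    Tendsto (fun e => proportion (Set.kernImage (reduceModPow p ι e) U)) atTop
      (nhds (μ.real (interior U))) := by
  simp_rw [← measureReal_preimage_reduceModPow μ, ← iUnion_preimage_kernImage_reduceModPow U]
  exact (ENNReal.tendsto_toReal (measure_ne_top μ _)).comp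
    (tendsto_measure_iUnion_atTop (monotone_preimage_kernImage_reduceModPow U))

end Padic

section LocalGlobal

variable {d : ℕ} (U : (p : Nat.Primes) → Set (Fin d → ℤ_[(p : ℕ)]))
  (μ : (p : Nat.Primes) → Measure (Fin d → ℤ_[(p : ℕ)]))
  [∀ p, (μ p).IsAddLeftInvariant] [∀ p, IsProbabilityMeasure (μ p)]

theorem one_sub_prod_one_sub_proportion_kernImage_le_upperDensity (F : Finset Nat.Primes) (e : ℕ) :
    1 - ∏ p ∈ F, (1 - proportion (Set.kernImage (reduceModPow p (Fin d) e) (U p))) ≤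
      upperDensity {a : Fin d → ℤ | ∃ p ∈ F, (fun i => (a i : ℤ_[(p : ℕ)])) ∈ U p} := by
  have (p : F) : NeZero ((p : ℕ) ^ e) := ⟨pow_ne_zero _ p.1.2.ne_zero⟩
  have hcop : Pairwise (Function.onFun Nat.Coprime fun p : F => (p : ℕ) ^ e) := fun p q hpq =>
    Nat.Coprime.pow _ _ ((Nat.coprime_primes p.1.2 q.1.2).2 fun h =>
      hpq (Subtype.ext (Subtype.ext h)))
  rw [← Finset.prod_coe_sort F]
  refine (one_sub_prod_one_sub_proportion_le_upperDensity _ hcop _).trans (upperDensity_mono ?_)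
  rintro a ⟨p, hp⟩
  exact ⟨p, p.2, hp (reduceModPow_intCast e a)⟩

theorem one_sub_prod_one_sub_measureReal_interior_le_upperDensity (F : Finset Nat.Primes) :
    1 - ∏ p ∈ F, (1 - (μ p).real (interior (U p))) ≤
      upperDensity {a : Fin d → ℤ | ∃ p ∈ F, (fun i => (a i : ℤ_[(p : ℕ)])) ∈ U p} :=
  le_of_tendsto'
    (tendsto_const_nhds.sub (tendsto_finsetProd F fun p _ =>
      tendsto_const_nhds.sub (tendsto_proportion_kernImage_reduceModPow (μ p) (U p))))
    (one_sub_prod_one_sub_proportion_kernImage_le_upperDensity U F)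

theorem summable_measureReal_interior {M : ℕ}
    (hM : upperDensity {a : Fin d → ℤ |
      ∃ p : Nat.Primes, M < (p : ℕ) ∧ (fun i => (a i : ℤ_[(p : ℕ)])) ∈ U p} < 1) :
    Summable fun p => (μ p).real (interior (U p)) := by
  have hlarge : Summable fun p : {p : Nat.Primes // M < (p : ℕ)} =>
      (μ p).real (interior (U p)) := by
    refine summable_of_one_sub_prod_one_sub_le (fun _ => measureReal_nonneg)
      (fun _ => measureReal_le_one) hM fun F => ?_
    have hF := one_sub_prod_one_sub_measureReal_interior_le_upperDensity U μ
      (F.map (Function.Embedding.subtype _))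
    rw [Finset.prod_map] at hF
    refine hF.trans (upperDensity_mono ?_)
    rintro a ⟨p, hp, ha⟩
    exact ⟨p, Finset.property_of_mem_map_subtype F hp, ha⟩
  have hsmall : {p : Nat.Primes | (p : ℕ) ≤ M}.Finite :=
    (Set.finite_Iic M).preimage Nat.Primes.coe_nat_injective.injOn
  refine summable_of_summable_comp_of_finite_compl_range Subtype.val_injective ?_ hlarge
  simpa [Set.compl_ofPred] using hsmall

end LocalGlobal

theorem poonen_stoll_summable_general {d : ℕ} (Uinf : Set (Fin d → ℝ))
    (Up : (p : Nat.Primes) → Set (Fin d → ℤ_[(p : ℕ)]))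
    (μ : (p : Nat.Primes) → Measure (Fin d → ℤ_[(p : ℕ)]))
    [∀ p, (μ p).IsAddLeftInvariant] [∀ p, IsProbabilityMeasure (μ p)]
    (hfr : ∀ p, μ p (frontier (Up p)) = 0) {M : ℕ}
    (hM : upperDensity {a : Fin d → ℤ |
      ∃ p : Nat.Primes, M < (p : ℕ) ∧ (fun i => (a i : ℤ_[(p : ℕ)])) ∈ Up p} < 1) :
    Summable (placeMass d Uinf Up μ) := by
  have hmass : ∀ p, placeMass d Uinf Up μ (some p) = (μ p).real (interior (Up p)) := fun p =>
    congrArg ENNReal.toReal (measure_interior_of_null_frontier (hfr p)).symm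
  refine summable_of_summable_comp_of_finite_compl_range (Option.some_injective _) ?_
    ((summable_measureReal_interior Up μ hM).congr fun p => (hmass p).symm)
  simp [Set.compl_range_some]

/-- Poonen–Stoll local-global principle, convergence: with `U_∞ ⊆ ℝ^d` a cone
with Lebesgue-null boundary, `U_p ⊆ ℤ_p^d` with `μ_p`-null boundary (`μ_p` the normalized
Haar measure, i.e. the translation-invariant probability Haar measure on `ℤ_p^d`), if the
upper density of `{a ∈ ℤ^d : a ∈ U_p for some prime p > M}` tends to `0` as `M → ∞`, then
`Σ_{ν ∈ M_ℚ} s_ν` converges. -/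
theorem poonen_stoll_summable (d : ℕ) (hd : 0 < d)
    (Uinf : Set (Fin d → ℝ))
    (hcone : {y : Fin d → ℝ | ∃ c : ℝ, 0 ≤ c ∧ ∃ x ∈ Uinf, y = c • x} = Uinf)
    (hfrInf : volume (frontier Uinf) = 0)
    (Up : (p : Nat.Primes) → Set (Fin d → ℤ_[(p : ℕ)]))
    (μ : (p : Nat.Primes) → Measure (Fin d → ℤ_[(p : ℕ)]))
    (hHaar : ∀ p, (μ p).IsAddHaarMeasure)
    (hProb : ∀ p, IsProbabilityMeasure (μ p))
    (hfr : ∀ p, μ p (frontier (Up p)) = 0)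
    (hcond : Tendsto
      (fun M : ℕ => upperDensity {a : Fin d → ℤ |
        ∃ p : Nat.Primes, M < (p : ℕ) ∧ (fun i => ((a i : ℤ_[(p : ℕ)]))) ∈ Up p})
      atTop (nhds 0)) :
    Summable (placeMass d Uinf Up μ) :=
  have ⟨_, hM⟩ := (hcond.eventually_lt_const one_pos).exists
  poonen_stoll_summable_general Uinf Up μ hfr hM
end
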